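/- arXiv:2505.13189 — 3 statements merged into one kernel-verified Lean document; each statement's English description precedes it below -/
import Mathlib

section
/- Let X₀ ~ μ and Z ~ γ be independent random vectors, where μ is a probability measure on ℝᵈ with μ ≪ γ and ∫‖x‖ dμ(x) < ∞. Fix t > 0 and set X_t := e^{-t/2} X₀ + √(1 - e^{-t}) Z, and let μ_t denote the law of X_t. Then μ_t ≪ γ, its density ρ_t := dμ_t/dγ is everywhere strictly positive and continuously differentiable, and for μ_t-almost every x ∈ ℝᵈ the conditional expectation satisfies E[X₀ | X_t = x] = e^{-t/2} x + (e^{t/2} - e^{-t/2}) · C ∇ log ρ_t(x). (This is the finite-dimensional case ℍ = ℝᵈ of the paper's Theorem 1: the Γ-score of the Ornstein–Uhlenbeck forward process equals a conditional expectation.) -/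
open MeasureTheory Real
open scoped ENNReal RealInnerProductSpace

/-- Reinterpret a plain vector `Fin k → ℝ` as an element of `EuclideanSpace ℝ (Fin k)`. -/
def toEuc {k : ℕ} (v : Fin k → ℝ) : EuclideanSpace ℝ (Fin k) := WithLp.toLp 2 v

/-- Reinterpret an element of `EuclideanSpace ℝ (Fin k)` as a plain vector `Fin k → ℝ`. -/
def fromEuc {k : ℕ} (v : EuclideanSpace ℝ (Fin k)) : Fin k → ℝ := v

/-- The centered Gaussian measure `N(0, C)` on `ℝᵈ` (realized as `EuclideanSpace ℝ (Fin k)`),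
with covariance matrix `C`, defined via its density with respect to Lebesgue measure. -/
noncomputable def gaussianM {k : ℕ} (C : Matrix (Fin k) (Fin k) ℝ) :
    Measure (EuclideanSpace ℝ (Fin k)) :=
  MeasureTheory.volume.withDensity fun x =>
    ENNReal.ofReal ((2 * π) ^ (-(k : ℝ) / 2) * C.det ^ (-(1 : ℝ) / 2) *
      Real.exp (-(⟪x, toEuc (Matrix.mulVec C⁻¹ x)⟫) / 2))

instance {k : ℕ} (C : Matrix (Fin k) (Fin k) ℝ) : SFinite (gaussianM C) := by
  unfold gaussianM; infer_instance

/-- The forward Ornstein–Uhlenbeck noising map at time `t`: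
`(x, z) ↦ e^{-t/2} x + √(1 - e^{-t}) z`, so that `X_t = ouMap t (X₀, Z)`. -/
noncomputable def ouMap {k : ℕ} (t : ℝ)
    (p : EuclideanSpace ℝ (Fin k) × EuclideanSpace ℝ (Fin k)) :
    EuclideanSpace ℝ (Fin k) :=
  Real.exp (-t / 2) • p.1 + Real.sqrt (1 - Real.exp (-t)) • p.2

section GammaScoreAux

variable {E : Type*} [NormedAddCommGroup E] [InnerProductSpace ℝ E] [FiniteDimensional ℝ E]
  [MeasurableSpace E] [BorelSpace E]

/-- Transition kernel density with respect to the Gaussian. -/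
noncomputable def ouKer (L : E →L[ℝ] E) (a s c : ℝ) (x y : E) : ℝ :=
  c * Real.exp (-⟪y - a • x, L (y - a • x)⟫ / (2 * s ^ 2) + ⟪y, L y⟫ / 2)

/-- Its gradient in `y`. -/
noncomputable def ouGrad (L : E →L[ℝ] E) (a s c : ℝ) (x y : E) : E :=
  ouKer L a s c x y • ((a / s ^ 2) • L (x - a • y))

lemma ouKer_pos (L : E →L[ℝ] E) {a s c : ℝ} (hc : 0 < c) (x y : E) : 0 < ouKer L a s c x y := by
  unfold ouKer; positivity

lemma ouKer_cont (L : E →L[ℝ] E) (a s c : ℝ) :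
    Continuous (fun p : E × E => ouKer L a s c p.1 p.2) := by
  unfold ouKer; fun_prop

lemma ouGrad_cont (L : E →L[ℝ] E) (a s c : ℝ) :
    Continuous (fun p : E × E => ouGrad L a s c p.1 p.2) := by
  unfold ouGrad
  exact (ouKer_cont L a s c).smul (by fun_prop)

lemma ouKer_le (L : E →L[ℝ] E) (hpos : ∀ x, 0 ≤ ⟪x, L x⟫) {a s c : ℝ} (hc : 0 < c) (x : E)
    {y : E} {R : ℝ} (hy : ‖y‖ ≤ R) : ouKer L a s c x y ≤ c * Real.exp (‖L‖ * R ^ 2 / 2) := by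
  unfold ouKer
  have h1 : -⟪y - a • x, L (y - a • x)⟫ / (2 * s ^ 2) ≤ 0 :=
    div_nonpos_of_nonpos_of_nonneg (by linarith [hpos (y - a • x)]) (by positivity)
  have h2 : ⟪y, L y⟫ ≤ ‖L‖ * R ^ 2 := by
    calc ⟪y, L y⟫ ≤ ‖y‖ * ‖L y‖ := real_inner_le_norm _ _
      _ ≤ ‖y‖ * (‖L‖ * ‖y‖) := by gcongr; exact L.le_opNorm y
      _ = ‖L‖ * ‖y‖ ^ 2 := by ring
      _ ≤ _ := by gcongr
  gcongr
  linarith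

lemma ouGrad_le (L : E →L[ℝ] E) (hpos : ∀ x, 0 ≤ ⟪x, L x⟫) {a s c : ℝ} (hc : 0 < c) (ha : 0 < a)
    (x : E) {y : E} {R : ℝ} (hy : ‖y‖ ≤ R) :
    ‖ouGrad L a s c x y‖ ≤
      c * Real.exp (‖L‖ * R ^ 2 / 2) * (a / s ^ 2 * (‖L‖ * (‖x‖ + a * R))) := by
  unfold ouGrad
  rw [norm_smul, norm_smul, Real.norm_of_nonneg (ouKer_pos L hc x y).le,
    Real.norm_of_nonneg (by positivity)]
  have h3 := ouKer_le L hpos hc x hy (a := a) (s := s)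
  have h4 : ‖L (x - a • y)‖ ≤ ‖L‖ * (‖x‖ + a * R) := by
    refine (L.le_opNorm _).trans ?_
    gcongr
    refine (norm_sub_le _ _).trans ?_
    rw [norm_smul, Real.norm_of_nonneg ha.le]
    gcongr
  gcongr

lemma ouKer_grad (L : E →L[ℝ] E) (hsym : ∀ x y, ⟪L x, y⟫ = ⟪x, L y⟫) {a s c : ℝ}
    (hs : 0 < s) (has : a ^ 2 + s ^ 2 = 1) (x y : E) :
    HasFDerivAt (fun y => ouKer L a s c x y) (innerSL ℝ (ouGrad L a s c x y)) y := by
  have hid : HasFDerivAt (fun y : E => y) (ContinuousLinearMap.id ℝ E) y := hasFDerivAt_id y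
  have h0 : HasFDerivAt (fun y : E => y - a • x) (ContinuousLinearMap.id ℝ E) y :=
    hid.sub_const _
  have h1 := h0.inner ℝ (L.hasFDerivAt.comp y h0)
  have h2 := hid.inner ℝ (L.hasFDerivAt.comp y hid)
  have h3 := (((h1.neg.mul_const ((2 * s ^ 2)⁻¹)).add (h2.mul_const (2⁻¹))).exp).const_mul c
  have h4 := h3.congr_of_eventuallyEq (f₁ := fun y => ouKer L a s c x y)
    (Filter.Eventually.of_forall fun z => by simp [ouKer, div_eq_mul_inv])
  refine h4.congr_fderiv ?_
  ext v
  simp [ouGrad, ouKer, fderivInnerCLM_apply, inner_sub_left, inner_sub_right, inner_smul_left,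
    inner_smul_right, hsym, real_inner_comm, div_eq_mul_inv, mul_add]
  have c1 : ∀ z, ⟪v, L z⟫ = ⟪z, L v⟫ := fun z => by rw [← hsym, real_inner_comm]
  rw [c1 x, c1 y]
  generalize rexp _ = w
  field_simp
  rw [show s ^ 2 = 1 - a ^ 2 by linarith]
  ring

end GammaScoreAux
section GammaScoreAux2

variable {E : Type*} [NormedAddCommGroup E] [InnerProductSpace ℝ E] [FiniteDimensional ℝ E]
  [MeasurableSpace E] [BorelSpace E]

lemma ouKer_int (L : E →L[ℝ] E) (hpos : ∀ x, 0 ≤ ⟪x, L x⟫) {a s c : ℝ} (hc : 0 < c)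
    (μ : Measure E) [IsProbabilityMeasure μ] (y : E) :
    Integrable (fun x => ouKer L a s c x y) μ := by
  have hm : Continuous (fun x => ouKer L a s c x y) :=
    (ouKer_cont L a s c).comp (Continuous.prodMk continuous_id continuous_const)
  refine Integrable.mono' (integrable_const (c * Real.exp (‖L‖ * ‖y‖ ^ 2 / 2)))
    hm.aestronglyMeasurable (Filter.Eventually.of_forall fun x => ?_)
  rw [Real.norm_of_nonneg (ouKer_pos L hc x y).le]
  exact ouKer_le L hpos hc x le_rfl

lemma ouBound_int (L : E →L[ℝ] E) {a s c R : ℝ}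
    (μ : Measure E) [IsProbabilityMeasure μ] (hmom : Integrable (fun x : E => ‖x‖) μ) :
    Integrable (fun x : E =>
      c * Real.exp (‖L‖ * R ^ 2 / 2) * (a / s ^ 2 * (‖L‖ * (‖x‖ + a * R)))) μ :=
  (((hmom.add (integrable_const _)).const_mul _).const_mul _).const_mul _

lemma ouGrad_int (L : E →L[ℝ] E) (hpos : ∀ x, 0 ≤ ⟪x, L x⟫) {a s c : ℝ} (hc : 0 < c)
    (ha : 0 < a) (μ : Measure E) [IsProbabilityMeasure μ]
    (hmom : Integrable (fun x : E => ‖x‖) μ) (y : E) :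
    Integrable (fun x => ouGrad L a s c x y) μ := by
  have hm : Continuous (fun x => ouGrad L a s c x y) :=
    (ouGrad_cont L a s c).comp (Continuous.prodMk continuous_id continuous_const)
  exact Integrable.mono' (ouBound_int L μ hmom)
    hm.aestronglyMeasurable (Filter.Eventually.of_forall fun x => ouGrad_le L hpos hc ha x le_rfl)

lemma ouKerX_int (L : E →L[ℝ] E) (hpos : ∀ x, 0 ≤ ⟪x, L x⟫) {a s c : ℝ} (hc : 0 < c)
    (μ : Measure E) [IsProbabilityMeasure μ]
    (hmom : Integrable (fun x : E => ‖x‖) μ) (y : E) :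
    Integrable (fun x => ouKer L a s c x y • x) μ := by
  have hm : Continuous (fun x => ouKer L a s c x y) :=
    (ouKer_cont L a s c).comp (Continuous.prodMk continuous_id continuous_const)
  refine Integrable.mono' (hmom.const_mul (c * Real.exp (‖L‖ * ‖y‖ ^ 2 / 2)))
    (hm.smul continuous_id).aestronglyMeasurable (Filter.Eventually.of_forall fun x => ?_)
  rw [norm_smul, Real.norm_of_nonneg (ouKer_pos L hc x y).le]
  gcongr
  exact ouKer_le L hpos hc x le_rfl

/-- The density. -/
noncomputable def ouRho (L : E →L[ℝ] E) (a s c : ℝ) (μ : Measure E) (y : E) : ℝ :=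
  ∫ x, ouKer L a s c x y ∂μ

lemma ouRho_pos (L : E →L[ℝ] E) (hpos : ∀ x, 0 ≤ ⟪x, L x⟫) {a s c : ℝ} (hc : 0 < c)
    (μ : Measure E) [IsProbabilityMeasure μ] (y : E) : 0 < ouRho L a s c μ y := by
  unfold ouRho
  rw [integral_pos_iff_support_of_nonneg (fun x => (ouKer_pos L hc x y).le)
    (ouKer_int L hpos hc μ y)]
  have : Function.support (fun x => ouKer L a s c x y) = Set.univ :=
    Set.eq_univ_of_forall fun x => (ouKer_pos L hc x y).ne'
  rw [this]; simp

lemma ouRho_fderiv (L : E →L[ℝ] E) (hsym : ∀ x y, ⟪L x, y⟫ = ⟪x, L y⟫)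
    (hpos : ∀ x, 0 ≤ ⟪x, L x⟫) {a s c : ℝ} (hc : 0 < c)
    (ha : 0 < a) (hs : 0 < s) (has : a ^ 2 + s ^ 2 = 1) (μ : Measure E) [IsProbabilityMeasure μ]
    (hmom : Integrable (fun x : E => ‖x‖) μ) (y : E) :
    HasFDerivAt (ouRho L a s c μ) (innerSL ℝ (∫ x, ouGrad L a s c x y ∂μ)) y := by
  have hG : Continuous (fun x => ouGrad L a s c x y) :=
    (ouGrad_cont L a s c).comp (Continuous.prodMk continuous_id continuous_const)
  have h := hasFDerivAt_integral_of_dominated_of_fderiv_le (𝕜 := ℝ) (μ := μ) (x₀ := y)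
    (F := fun y x => ouKer L a s c x y)
    (F' := fun y x => innerSL ℝ (ouGrad L a s c x y))
    (bound := fun x => c * Real.exp (‖L‖ * (‖y‖ + 1) ^ 2 / 2) *
      (a / s ^ 2 * (‖L‖ * (‖x‖ + a * (‖y‖ + 1)))))
    (Metric.ball_mem_nhds y one_pos)
    (Filter.Eventually.of_forall fun z => (ouKer_int L hpos hc μ z).aestronglyMeasurable)
    (ouKer_int L hpos hc μ y)
    ((innerSL ℝ).continuous.comp hG).aestronglyMeasurable
    (Filter.Eventually.of_forall fun x z hz => by
      rw [innerSL_apply_norm]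
      refine ouGrad_le L hpos hc ha x ?_
      have : ‖z - y‖ < 1 := by simpa [dist_eq_norm] using hz
      have := norm_le_norm_add_norm_sub y z
      rw [norm_sub_rev] at this
      linarith)
    (ouBound_int L μ hmom)
    (Filter.Eventually.of_forall fun x z _ => ouKer_grad L hsym hs has x z)
  rw [(innerSL ℝ).integral_comp_comm (ouGrad_int L hpos hc ha μ hmom y)] at h
  exact h

lemma ouRho_contDiff (L : E →L[ℝ] E) (hsym : ∀ x y, ⟪L x, y⟫ = ⟪x, L y⟫)
    (hpos : ∀ x, 0 ≤ ⟪x, L x⟫) {a s c : ℝ} (hc : 0 < c)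
    (ha : 0 < a) (hs : 0 < s) (has : a ^ 2 + s ^ 2 = 1) (μ : Measure E) [IsProbabilityMeasure μ]
    (hmom : Integrable (fun x : E => ‖x‖) μ) :
    ContDiff ℝ 1 (ouRho L a s c μ) := by
  rw [contDiff_one_iff_hasFDerivAt]
  refine ⟨_, ?_, ouRho_fderiv L hsym hpos hc ha hs has μ hmom⟩
  refine (innerSL ℝ).continuous.comp ?_
  rw [continuous_iff_continuousAt]
  intro y
  refine continuousAt_of_dominated (bound := fun x => c * Real.exp (‖L‖ * (‖y‖ + 1) ^ 2 / 2) *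
      (a / s ^ 2 * (‖L‖ * (‖x‖ + a * (‖y‖ + 1)))))
    (Filter.Eventually.of_forall fun z => (ouGrad_int L hpos hc ha μ hmom z).aestronglyMeasurable)
    ?_ (ouBound_int L μ hmom) (Filter.Eventually.of_forall fun x => ?_)
  · filter_upwards [Metric.ball_mem_nhds y one_pos] with z hz
    refine Filter.Eventually.of_forall fun x => ouGrad_le L hpos hc ha x ?_
    have : ‖z - y‖ < 1 := by simpa [dist_eq_norm] using hz
    have := norm_le_norm_add_norm_sub y z
    rw [norm_sub_rev] at this
    linarith
  · exact ((ouGrad_cont L a s c).comp (Continuous.prodMk continuous_const continuous_id)).continuousAt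

/-- Posterior mean. -/
noncomputable def ouMean (L : E →L[ℝ] E) (a s c : ℝ) (μ : Measure E) (y : E) : E :=
  (ouRho L a s c μ y)⁻¹ • ∫ x, ouKer L a s c x y • x ∂μ

lemma ouMean_eq (L L' : E →L[ℝ] E) (hL : ∀ x, L' (L x) = x)
    (hsym : ∀ x y, ⟪L x, y⟫ = ⟪x, L y⟫)
    (hpos : ∀ x, 0 ≤ ⟪x, L x⟫) {a s c : ℝ} (hc : 0 < c)
    (ha : 0 < a) (hs : 0 < s) (has : a ^ 2 + s ^ 2 = 1) (μ : Measure E) [IsProbabilityMeasure μ]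
    (hmom : Integrable (fun x : E => ‖x‖) μ) (y : E) :
    ouMean L a s c μ y = a • y + (s ^ 2 / a) •
      L' (gradient (fun z => Real.log (ouRho L a s c μ z)) y) := by
  have hρ := ouRho_pos L hpos hc μ y (a := a) (s := s)
  have h1 := (ouRho_fderiv L hsym hpos hc ha hs has μ hmom y).log hρ.ne'
  have h2 : gradient (fun z => Real.log (ouRho L a s c μ z)) y =
      (ouRho L a s c μ y)⁻¹ • ∫ x, ouGrad L a s c x y ∂μ := by
    apply HasGradientAt.gradient
    rw [hasGradientAt_iff_hasFDerivAt]
    refine h1.congr_fderiv ?_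
    ext v
    simp [inner_smul_left]
  have h3 : L' (∫ x, ouGrad L a s c x y ∂μ) =
      (a / s ^ 2) • ((∫ x, ouKer L a s c x y • x ∂μ) - (a * ouRho L a s c μ y) • y) := by
    rw [← L'.integral_comp_comm (ouGrad_int L hpos hc ha μ hmom y)]
    have : ∀ x, L' (ouGrad L a s c x y) =
        (a / s ^ 2) • (ouKer L a s c x y • x - ouKer L a s c x y • (a • y)) := by
      intro x
      simp only [ouGrad, map_smul, hL]
      rw [smul_comm, smul_sub]
    simp_rw [this]
    rw [integral_smul, integral_sub (ouKerX_int L hpos hc μ hmom y)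
      ((ouKer_int L hpos hc μ y).smul_const _), integral_smul_const, smul_smul, mul_comm a]
    rfl
  rw [h2, map_smul, h3, ouMean]
  have e1 : (s ^ 2 / a) * ((ouRho L a s c μ y)⁻¹ * (a / s ^ 2)) = (ouRho L a s c μ y)⁻¹ := by
    field_simp
  rw [smul_smul, smul_smul, mul_assoc, e1, smul_sub, smul_smul]
  have e2 : (ouRho L a s c μ y)⁻¹ * (a * ouRho L a s c μ y) = a := by field_simp
  rw [e2]; abel

end GammaScoreAux2
section GammaScoreAux3

variable {E : Type*} [NormedAddCommGroup E] [InnerProductSpace ℝ E] [FiniteDimensional ℝ E]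
  [MeasurableSpace E] [BorelSpace E]

/-- Unnormalised Gaussian. -/
noncomputable def ouGauss (L : E →L[ℝ] E) (K : ℝ) : Measure E :=
  volume.withDensity fun x => ENNReal.ofReal (K * Real.exp (-⟪x, L x⟫ / 2))

lemma ouGauss_sfinite (L : E →L[ℝ] E) (K : ℝ) : SFinite (ouGauss L K) := by
  unfold ouGauss; infer_instance

lemma ouGauss_finite (L : E →L[ℝ] E) (hpd : ∀ x, x ≠ 0 → 0 < ⟪x, L x⟫) (K : ℝ) :
    IsFiniteMeasure (ouGauss L K) := by
  have hlow : ∃ b : ℝ, 0 < b ∧ ∀ x : E, b * ‖x‖ ^ 2 ≤ ⟪x, L x⟫ := by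
    rcases subsingleton_or_nontrivial E with h | h
    · exact ⟨1, one_pos, fun x => by simp [Subsingleton.elim x 0]⟩
    obtain ⟨x0, hx0, hmin⟩ := (isCompact_sphere (0 : E) 1).exists_isMinOn
      (NormedSpace.sphere_nonempty.mpr zero_le_one)
      (f := fun x => ⟪x, L x⟫) (by fun_prop)
    have hx0' : ‖x0‖ = 1 := by simpa using hx0
    refine ⟨⟪x0, L x0⟫, hpd x0 (by rintro rfl; simp at hx0'), fun x => ?_⟩
    by_cases hx : x = 0
    · simp [hx]
    have hn : 0 < ‖x‖ := norm_pos_iff.mpr hx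
    have h1 : ⟪x0, L x0⟫ ≤ ⟪‖x‖⁻¹ • x, L (‖x‖⁻¹ • x)⟫ :=
      hmin (by simp [norm_smul, hn.ne'])
    rw [map_smul, inner_smul_left, inner_smul_right] at h1
    simp only [conj_trivial] at h1
    calc ⟪x0, L x0⟫ * ‖x‖ ^ 2 ≤ (‖x‖⁻¹ * (‖x‖⁻¹ * ⟪x, L x⟫)) * ‖x‖ ^ 2 := by gcongr
      _ = ⟪x, L x⟫ := by field_simp
  obtain ⟨b, hb, hlow⟩ := hlow
  have h0 : Integrable (fun x : E => Real.exp (-(b / 2) * ‖x‖ ^ 2)) := by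
    have := GaussianFourier.integrable_cexp_neg_mul_sq_norm_add (V := E) (b := ((b / 2 : ℝ) : ℂ))
      (by simpa using hb) 0 0
    have h := this.norm
    refine h.congr (Filter.Eventually.of_forall fun x => ?_)
    simp [Complex.norm_exp, ← Complex.ofReal_pow]
  unfold ouGauss
  refine isFiniteMeasure_withDensity_ofReal (Integrable.hasFiniteIntegral ?_)
  refine Integrable.const_mul ?_ _
  refine h0.mono' (by fun_prop) (Filter.Eventually.of_forall fun x => ?_)
  rw [Real.norm_of_nonneg (Real.exp_pos _).le]
  gcongr
  linarith [hlow x]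

set_option maxHeartbeats 2000000 in
lemma ou_map_pair (L : E →L[ℝ] E) {K a s : ℝ} (hK : 0 ≤ K) (hs : 0 < s) (μ : Measure E)
    [IsProbabilityMeasure μ] :
    Measure.map (fun p : E × E => (p.1, a • p.1 + s • p.2)) (μ.prod (ouGauss L K)) =
      (μ.prod (ouGauss L K)).withDensity (fun p =>
        ENNReal.ofReal (ouKer L a s (s ^ Module.finrank ℝ E)⁻¹ p.1 p.2)) := by
  haveI := ouGauss_sfinite L K
  have hk : Measurable (fun p : E × E =>
      ENNReal.ofReal (ouKer L a s (s ^ Module.finrank ℝ E)⁻¹ p.1 p.2)) :=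
    (ouKer_cont L a s _).measurable.ennreal_ofReal
  have hg : Measurable (fun x : E => ENNReal.ofReal (K * Real.exp (-⟪x, L x⟫ / 2))) := by fun_prop
  refine Measure.ext_of_lintegral _ fun f hf => ?_
  rw [lintegral_map hf (by fun_prop), lintegral_withDensity_eq_lintegral_mul _ hk hf,
    lintegral_prod _ (by fun_prop), lintegral_prod _ (by fun_prop)]
  refine lintegral_congr fun x => ?_
  simp only [Pi.mul_apply]
  have hfx : Measurable (fun y => f (x, y)) := by fun_prop
  have hkx : Measurable (fun y =>
    ENNReal.ofReal (ouKer L a s (s ^ Module.finrank ℝ E)⁻¹ x y)) := hk.comp measurable_prodMk_left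
  unfold ouGauss
  rw [lintegral_withDensity_eq_lintegral_mul _ hg (by fun_prop),
    lintegral_withDensity_eq_lintegral_mul _ hg (by fun_prop)]
  simp only [Pi.mul_apply]
  set h : E → ℝ≥0∞ := fun y =>
    ENNReal.ofReal (K * Real.exp (-⟪s⁻¹ • (y - a • x), L (s⁻¹ • (y - a • x))⟫ / 2)) * f (x, y)
    with hh
  have hmeas : Measurable h := by
    refine Measurable.mul ?_ hfx
    fun_prop
  have e1 : ∀ z, ENNReal.ofReal (K * Real.exp (-⟪z, L z⟫ / 2)) * f (x, a • x + s • z) =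
      h (a • x + s • z) := by
    intro z
    simp [hh, smul_smul, hs.ne']
  simp_rw [e1]
  have e2 : ∫⁻ z, h (a • x + s • z) = ∫⁻ w, h (a • x + w) ∂(Measure.map (s • ·) volume) := by
    rw [lintegral_map (by fun_prop) (by fun_prop)]
  rw [e2, Measure.map_addHaar_smul _ hs.ne', lintegral_smul_measure,
    lintegral_add_left_eq_self h, smul_eq_mul, ← lintegral_const_mul _ hmeas]
  refine lintegral_congr fun y => ?_
  rw [hh]
  simp only []
  rw [← mul_assoc, ← mul_assoc, ← ENNReal.ofReal_mul (by positivity),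
    ← ENNReal.ofReal_mul (by positivity)]
  congr 2
  rw [abs_of_pos (by positivity), ouKer]
  have e3 : Real.exp (-⟪s⁻¹ • (y - a • x), L (s⁻¹ • (y - a • x))⟫ / 2) =
      Real.exp (-⟪y, L y⟫ / 2) *
        Real.exp (-⟪y - a • x, L (y - a • x)⟫ / (2 * s ^ 2) + ⟪y, L y⟫ / 2) := by
    rw [← Real.exp_add, map_smul, inner_smul_left, inner_smul_right]
    congr 1
    simp only [conj_trivial]
    field_simp
    ring
  rw [e3]; ring

lemma ou_map (L : E →L[ℝ] E) (hpos : ∀ x, 0 ≤ ⟪x, L x⟫) {K a s : ℝ} (hK : 0 ≤ K) (hs : 0 < s)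
    (μ : Measure E) [IsProbabilityMeasure μ] :
    Measure.map (fun p : E × E => a • p.1 + s • p.2) (μ.prod (ouGauss L K)) =
      (ouGauss L K).withDensity (fun y =>
        ENNReal.ofReal (ouRho L a s (s ^ Module.finrank ℝ E)⁻¹ μ y)) := by
  haveI := ouGauss_sfinite L K
  have hc : 0 < (s ^ Module.finrank ℝ E)⁻¹ := by positivity
  have hk : Measurable (fun p : E × E =>
      ENNReal.ofReal (ouKer L a s (s ^ Module.finrank ℝ E)⁻¹ p.1 p.2)) :=
    (ouKer_cont L a s _).measurable.ennreal_ofReal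
  have h1 : Measure.map (fun p : E × E => a • p.1 + s • p.2) (μ.prod (ouGauss L K)) =
      Measure.map Prod.snd
        (Measure.map (fun p : E × E => (p.1, a • p.1 + s • p.2)) (μ.prod (ouGauss L K))) := by
    rw [Measure.map_map (by fun_prop) (by fun_prop)]; rfl
  rw [h1, ou_map_pair L hK hs μ]
  ext B hB
  rw [Measure.map_apply measurable_snd hB, withDensity_apply _ (measurable_snd hB),
    withDensity_apply _ hB]
  have : (Prod.snd ⁻¹' B : Set (E × E)) = Set.univ ×ˢ B := by ext; simp
  rw [this, ← Measure.prod_restrict, Measure.restrict_univ,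
    lintegral_prod_symm _ hk.aemeasurable]
  refine lintegral_congr fun y => ?_
  rw [ouRho, ofReal_integral_eq_lintegral_ofReal (ouKer_int L hpos hc μ y)
    (Filter.Eventually.of_forall fun x => (ouKer_pos L hc x y).le)]

lemma ou_condExp (L : E →L[ℝ] E) (hpos : ∀ x, 0 ≤ ⟪x, L x⟫) {K a s : ℝ} (hK : 0 ≤ K) (hs : 0 < s)
    [IsFiniteMeasure (ouGauss L K)]
    (μ : Measure E) [IsProbabilityMeasure μ] (hmom : Integrable (fun x : E => ‖x‖) μ) :
    (μ.prod (ouGauss L K))[(fun p => p.1) |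
        MeasurableSpace.comap (fun p : E × E => a • p.1 + s • p.2) inferInstance]
      =ᵐ[μ.prod (ouGauss L K)]
        fun p => ouMean L a s (s ^ Module.finrank ℝ E)⁻¹ μ (a • p.1 + s • p.2) := by
  set c := (s ^ Module.finrank ℝ E)⁻¹ with hcdef
  have hc : 0 < c := by positivity
  set γ := ouGauss L K with hγ
  set Y : E × E → E := fun p => a • p.1 + s • p.2 with hY
  set Φ : E × E → E × E := fun p => (p.1, Y p) with hΦ
  have hYm : Measurable Y := by fun_prop
  have hΦm : Measurable Φ := by fun_prop
  have hk : Measurable (fun p : E × E => ouKer L a s c p.1 p.2) := (ouKer_cont L a s _).measurable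
  have hkE : Measurable (fun p : E × E => ENNReal.ofReal (ouKer L a s c p.1 p.2)) :=
    hk.ennreal_ofReal
  have hπ : Measure.map Φ (μ.prod γ) = (μ.prod γ).withDensity
      (fun p => ENNReal.ofReal (ouKer L a s c p.1 p.2)) := ou_map_pair L hK hs μ
  have hmap : Measure.map Y (μ.prod γ) = γ.withDensity
      (fun y => ENNReal.ofReal (ouRho L a s c μ y)) := ou_map L hpos hK hs μ
  have hid : Integrable (fun x : E => x) μ :=
    (integrable_norm_iff (by fun_prop)).mp hmom
  have hfst : Integrable (fun p : E × E => p.1) (μ.prod γ) := hid.comp_fst γ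
  have hfst' : Integrable (fun p : E × E => p.1) (Measure.map Φ (μ.prod γ)) :=
    (integrable_map_measure (by fun_prop) hΦm.aemeasurable).mpr hfst
  have hkf : Integrable (fun p : E × E => ouKer L a s c p.1 p.2 • p.1) (μ.prod γ) := by
    rw [hπ, integrable_withDensity_iff_integrable_smul' hkE
      (Filter.Eventually.of_forall fun _ => ENNReal.ofReal_lt_top)] at hfst'
    refine hfst'.congr (Filter.Eventually.of_forall fun p => ?_)
    simp only [ENNReal.toReal_ofReal (ouKer_pos L hc p.1 p.2).le]
  have hJ : Integrable (fun y => ∫ x, ouKer L a s c x y • x ∂μ) γ := hkf.integral_prod_right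
  have hρm : Measurable (ouRho L a s c μ) :=
    (StronglyMeasurable.integral_prod_left' (μ := μ) hk.stronglyMeasurable).measurable
  have hJm : Measurable (fun y => ∫ x, ouKer L a s c x y • x ∂μ) :=
    (StronglyMeasurable.integral_prod_left' (μ := μ)
      (f := fun p : E × E => ouKer L a s c p.1 p.2 • p.1)
      (hk.smul measurable_fst).stronglyMeasurable).measurable
  have hmm : Measurable (ouMean L a s c μ) := hρm.inv.smul hJm
  have hρE : Measurable (fun y => ENNReal.ofReal (ouRho L a s c μ y)) := hρm.ennreal_ofReal
  have hJeq : ∀ y, (ENNReal.ofReal (ouRho L a s c μ y)).toReal • ouMean L a s c μ y =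
      ∫ x, ouKer L a s c x y • x ∂μ := by
    intro y
    have hp := ouRho_pos L hpos hc μ y (a := a) (s := s)
    rw [ENNReal.toReal_ofReal hp.le, ouMean, smul_inv_smul₀ hp.ne']
  have hmi : Integrable (ouMean L a s c μ) (Measure.map Y (μ.prod γ)) := by
    rw [hmap, integrable_withDensity_iff_integrable_smul' hρE
      (Filter.Eventually.of_forall fun _ => ENNReal.ofReal_lt_top)]
    simp_rw [hJeq]
    exact hJ
  have hmi' : Integrable (fun p => ouMean L a s c μ (Y p)) (μ.prod γ) :=
    (integrable_map_measure hmm.aestronglyMeasurable hYm.aemeasurable).mp hmi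
  symm
  refine ae_eq_condExp_of_forall_setIntegral_eq hYm.comap_le hfst
    (fun _ _ _ => hmi'.integrableOn) ?_ ?_
  · rintro _ ⟨B, hB, rfl⟩ -
    rw [← setIntegral_map hB hmm.aestronglyMeasurable hYm.aemeasurable, hmap,
      setIntegral_withDensity_eq_setIntegral_toReal_smul hρE
        (Filter.Eventually.of_forall fun _ => ENNReal.ofReal_lt_top) _ hB]
    simp_rw [hJeq]
    have hpre : Y ⁻¹' B = Φ ⁻¹' (Set.univ ×ˢ B) := by ext; simp [hΦ]
    have hBm : MeasurableSet ((Set.univ : Set E) ×ˢ B) := MeasurableSet.univ.prod hB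
    have h2 : ∫ p in Y ⁻¹' B, p.1 ∂(μ.prod γ) =
        ∫ p in (Set.univ ×ˢ B), p.1 ∂(Measure.map Φ (μ.prod γ)) := by
      rw [hpre, setIntegral_map hBm (by fun_prop) hΦm.aemeasurable]
    rw [h2, hπ, setIntegral_withDensity_eq_setIntegral_toReal_smul hkE
        (Filter.Eventually.of_forall fun _ => ENNReal.ofReal_lt_top) _ hBm]
    have h3 : ∀ p : E × E, (ENNReal.ofReal (ouKer L a s c p.1 p.2)).toReal • p.1 =
      ouKer L a s c p.1 p.2 • p.1 := fun p => by
        rw [ENNReal.toReal_ofReal (ouKer_pos L hc p.1 p.2).le]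
    simp_rw [h3]
    have hr : Integrable (fun p : E × E => ouKer L a s c p.1 p.2 • p.1) (μ.prod (γ.restrict B)) := by
      have := hkf.integrableOn (s := Set.univ ×ˢ B)
      rwa [IntegrableOn, ← Measure.prod_restrict, Measure.restrict_univ] at this
    rw [← Measure.prod_restrict, Measure.restrict_univ, integral_prod_symm _ hr]
  · exact (hmm.comp (comap_measurable Y)).stronglyMeasurable.aestronglyMeasurable

end GammaScoreAux3
/-- Γ-score identification (finite-dimensional case of Theorem 1): for `X₀ ~ μ ≪ γ` with
finite first moment, `Z ~ γ` independent, `t > 0` and `X_t = e^{-t/2} X₀ + √(1-e^{-t}) Z`,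
the law `μ_t` of `X_t` has a strictly positive `C¹` density `ρ_t` with respect to `γ`, and
`E[X₀ | X_t] = e^{-t/2} X_t + (e^{t/2} - e^{-t/2}) C ∇ log ρ_t (X_t)` almost surely. -/
theorem gamma_score_eq_condexp (d : ℕ) (hd : 0 < d)
    (C : Matrix (Fin d) (Fin d) ℝ) (hC : C.PosDef)
    (μ : Measure (EuclideanSpace ℝ (Fin d))) [IsProbabilityMeasure μ]
    (hac : μ ≪ gaussianM C)
    (hmom : Integrable (fun x : EuclideanSpace ℝ (Fin d) => ‖x‖) μ)
    (t : ℝ) (ht : 0 < t) :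
    ∃ ρ : EuclideanSpace ℝ (Fin d) → ℝ,
      (∀ x, 0 < ρ x) ∧ ContDiff ℝ 1 ρ ∧
      Measure.map (ouMap t) (μ.prod (gaussianM C))
        = (gaussianM C).withDensity (fun x => ENNReal.ofReal (ρ x)) ∧
      (μ.prod (gaussianM C))[(fun p => p.1) |
          MeasurableSpace.comap (ouMap t) inferInstance]
        =ᵐ[μ.prod (gaussianM C)]
          fun p =>
            Real.exp (-t / 2) • ouMap t p +
              (Real.exp (t / 2) - Real.exp (-t / 2)) •
                toEuc (Matrix.mulVec C
                  (fromEuc (gradient (fun y => Real.log (ρ y)) (ouMap t p)))) := by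
  set L : EuclideanSpace ℝ (Fin d) →L[ℝ] EuclideanSpace ℝ (Fin d) :=
    Matrix.toEuclideanCLM (𝕜 := ℝ) C⁻¹ with hL
  set L' : EuclideanSpace ℝ (Fin d) →L[ℝ] EuclideanSpace ℝ (Fin d) :=
    Matrix.toEuclideanCLM (𝕜 := ℝ) C with hL'
  have hdet : IsUnit C.det := hC.det_pos.ne'.isUnit
  have hinv : C⁻¹.PosDef := hC.inv
  have hLL : ∀ x, L' (L x) = x := by
    intro x
    have : L' * L = 1 := by
      rw [hL, hL', ← map_mul, Matrix.mul_nonsing_inv _ hdet, map_one]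
    exact DFunLike.congr_fun this x
  have hsym : ∀ x y, ⟪L x, y⟫ = ⟪x, L y⟫ := by
    intro x y
    have hT : C⁻¹.transpose = C⁻¹ := by
      simpa [Matrix.IsHermitian, Matrix.conjTranspose_eq_transpose_of_trivial] using hinv.isHermitian
    rw [real_inner_comm, hL, Matrix.inner_toEuclideanCLM, Matrix.inner_toEuclideanCLM,
      Matrix.dotProduct_mulVec, ← Matrix.mulVec_transpose, hT, dotProduct_comm]
  have hpd : ∀ x, x ≠ 0 → 0 < ⟪x, L x⟫ := by
    intro x hx
    rw [hL, Matrix.inner_toEuclideanCLM]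
    have hx' : x.ofLp ≠ 0 := fun h => hx (by ext i; simp [h])
    simpa using hinv.dotProduct_mulVec_pos hx'
  have hpos : ∀ x, 0 ≤ ⟪x, L x⟫ := by
    intro x
    by_cases hx : x = 0
    · simp [hx]
    · exact (hpd x hx).le
  set K : ℝ := (2 * π) ^ (-(d : ℝ) / 2) * C.det ^ (-(1 : ℝ) / 2) with hKdef
  have hK : 0 ≤ K := by
    have := hC.det_pos
    positivity
  have hγ : gaussianM C = ouGauss L K := rfl
  set a : ℝ := Real.exp (-t / 2) with hadef
  set s : ℝ := Real.sqrt (1 - Real.exp (-t)) with hsdef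
  have ha : 0 < a := Real.exp_pos _
  have hlt : Real.exp (-t) < 1 := by simpa using ht
  have hs : 0 < s := Real.sqrt_pos.mpr (by linarith)
  have ha2 : a ^ 2 = Real.exp (-t) := by
    rw [hadef, ← Real.exp_nat_mul]; congr 1; push_cast; ring
  have hs2 : s ^ 2 = 1 - Real.exp (-t) := Real.sq_sqrt (by linarith)
  have has : a ^ 2 + s ^ 2 = 1 := by linarith
  have hcoef : Real.exp (t / 2) - a = s ^ 2 / a := by
    have : Real.exp (t / 2) = a⁻¹ := by rw [hadef, ← Real.exp_neg]; congr 1; ring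
    rw [this, eq_div_iff ha.ne', sub_mul, inv_mul_cancel₀ ha.ne']
    linarith
  have hY : (ouMap t : _ → EuclideanSpace ℝ (Fin d)) = fun p => a • p.1 + s • p.2 := rfl
  have hc : 0 < (s ^ Module.finrank ℝ (EuclideanSpace ℝ (Fin d)))⁻¹ := by positivity
  haveI : IsFiniteMeasure (ouGauss L K) := ouGauss_finite L hpd K
  refine ⟨ouRho L a s (s ^ Module.finrank ℝ (EuclideanSpace ℝ (Fin d)))⁻¹ μ,
    ouRho_pos L hpos hc μ, ouRho_contDiff L hsym hpos hc ha hs has μ hmom, ?_, ?_⟩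
  · rw [hγ, hY]
    exact ou_map L hpos hK hs μ
  · rw [hγ, hY]
    refine (ou_condExp L hpos hK hs μ hmom).trans (Filter.Eventually.of_forall fun p => ?_)
    simp only []
    rw [ouMean_eq L L' hLL hsym hpos hc ha hs has μ hmom, hcoef]
    rfl
end

section
/- Let μ be a probability measure on ℝᵈ, let X ~ μ and Z ~ γ be independent, fix t ≥ 0, and let μ_t be the law of e^{-t/2} X + √(1 - e^{-t}) Z. Then KL(μ_t ‖ γ) ≤ e^{-t/2} · KL(μ ‖ γ). (The exponential entropy decay estimate (4.4) of the paper, proved via the Gaussian logarithmic Sobolev inequality and Gronwall's lemma.) -/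
open MeasureTheory Real Classical
open scoped ENNReal RealInnerProductSpace

/-- Kullback–Leibler divergence `KL(P‖Q) = ∫ log (dP/dQ) dP` if `P ≪ Q` (and the integral is
defined), and `KL(P‖Q) = +∞` otherwise. -/
noncomputable def KLdiv {α : Type*} [MeasurableSpace α] (P Q : Measure α) : ℝ≥0∞ :=
  if P ≪ Q ∧ Integrable (fun x => Real.log (P.rnDeriv Q x).toReal) P then
    ENNReal.ofReal (∫ x, Real.log (P.rnDeriv Q x).toReal ∂P)
  else ∞


namespace KLOU
set_option linter.unusedSectionVars false
open ProbabilityTheory InformationTheory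

section abstractKL
variable {A B D : Type*} [MeasurableSpace A] [MeasurableSpace B] [MeasurableSpace D]

/-- Chain rule of relative entropy against a product reference measure. -/
lemma klDiv_prod_right [StandardBorelSpace B] [Nonempty B] (P : Measure (A × B))
    [IsProbabilityMeasure P] (Q : Measure A) [IsProbabilityMeasure Q]
    (R : Measure B) [IsProbabilityMeasure R] :
    klDiv P (Q.prod R) = klDiv P.fst Q + klDiv P (P.fst.prod R) := by
  have h := klDiv_compProd_eq_add P.fst Q P.condKernel (Kernel.const A R)
  rwa [P.disintegrate, Measure.compProd_const, Measure.compProd_const] at h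

lemma klDiv_prod_same (P Q : Measure A) [IsProbabilityMeasure P] [IsProbabilityMeasure Q]
    (R : Measure B) [IsProbabilityMeasure R] :
    klDiv (P.prod R) (Q.prod R) = klDiv P Q := by
  have h := klDiv_compProd_left P Q (Kernel.const A R)
  rwa [Measure.compProd_const, Measure.compProd_const] at h

/-- Supermodularity of relative entropy with respect to a product measure. -/
lemma klDiv_supermod [StandardBorelSpace D] [Nonempty D] (P : Measure ((B × A) × D))
    [IsProbabilityMeasure P] (QB : Measure B) (QA : Measure A) (QD : Measure D)
    [IsProbabilityMeasure QB] [IsProbabilityMeasure QA] [IsProbabilityMeasure QD] :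
    klDiv (P.map (fun p => p.1)) (QB.prod QA)
        + klDiv (P.map (fun p => (p.1.2, p.2))) (QA.prod QD)
      ≤ klDiv P ((QB.prod QA).prod QD) + klDiv (P.map (fun p => p.1.2)) QA := by
  have hm : Measurable (fun p : (B × A) × D => (p.1.2, p.2)) := by fun_prop
  have hm1 : Measurable (fun p : (B × A) × D => p.1.2) := by fun_prop
  have : IsProbabilityMeasure (P.map (fun p => (p.1.2, p.2))) :=
    Measure.isProbabilityMeasure_map hm.aemeasurable
  have h1 := klDiv_prod_right P (QB.prod QA) QD
  have h2 := klDiv_prod_right (P.map (fun p => (p.1.2, p.2))) QA QD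
  have h3 : (P.map (fun p => (p.1.2, p.2))).fst = P.map (fun p => p.1.2) := by
    rw [Measure.fst, Measure.map_map measurable_fst hm]; rfl
  have h4 : (P.fst.prod QD).map (fun p : (B × A) × D => (p.1.2, p.2))
      = (P.map (fun p => p.1.2)).prod QD := by
    have : (fun p : (B × A) × D => (p.1.2, p.2)) = Prod.map Prod.snd id := rfl
    rw [this, ← Measure.map_prod_map _ _ measurable_snd measurable_id, Measure.map_id,
      Measure.fst, Measure.map_map measurable_snd measurable_fst]; rfl
  have h5 := klDiv_map_le P (P.fst.prod QD) hm
  rw [h4] at h5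
  rw [h1, h2, h3]
  have h6 : P.map (fun p => p.1) = P.fst := rfl
  rw [h6, add_assoc]
  refine add_le_add le_rfl ?_
  rw [add_comm]
  exact add_le_add h5 le_rfl
end abstractKL

section laws
variable {E : Type*} [NormedAddCommGroup E] [NormedSpace ℝ E] [MeasurableSpace E] [BorelSpace E]
  [SecondCountableTopology E]

/-- The law of `a X + b Z`, with `X ~ ρ`, `Z ~ γ` independent. -/
noncomputable def ou (ρ γ : Measure E) (a b : ℝ) : Measure E :=
  Measure.map (fun p : E × E => a • p.1 + b • p.2) (ρ.prod γ)

/-- Law of a rescaled variable. -/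
noncomputable def scl (a : ℝ) (ρ : Measure E) : Measure E := ρ.map (fun x => a • x)

/-- Rotation. -/
def rot (p q : ℝ) (z : E × E) : E × E := (p • z.1 - q • z.2, q • z.1 + p • z.2)

lemma measurable_rot (p q : ℝ) : Measurable (rot p q : E × E → E × E) := by
  unfold rot; fun_prop

instance (a : ℝ) (ρ : Measure E) [IsProbabilityMeasure ρ] : IsProbabilityMeasure (scl a ρ) :=
  Measure.isProbabilityMeasure_map (by fun_prop)

instance (a b : ℝ) (ρ γ : Measure E) [IsProbabilityMeasure ρ] [IsProbabilityMeasure γ] :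
    IsProbabilityMeasure (ou ρ γ a b) :=
  Measure.isProbabilityMeasure_map (by fun_prop)

lemma ou_eq_conv (ρ γ : Measure E) [IsProbabilityMeasure ρ] [IsProbabilityMeasure γ] (a b : ℝ) :
    ou ρ γ a b = Measure.conv (scl a ρ) (scl b γ) := by
  unfold Measure.conv scl ou
  rw [Measure.map_prod_map _ _ (by fun_prop) (by fun_prop), Measure.map_map (by fun_prop) (by fun_prop)]
  rfl

lemma scl_conv (ρ γ : Measure E) [IsProbabilityMeasure ρ] [IsProbabilityMeasure γ] (a : ℝ) :
    scl a (Measure.conv ρ γ) = Measure.conv (scl a ρ) (scl a γ) :=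
  Measure.map_conv_continuousLinearMap (a • ContinuousLinearMap.id ℝ E)

lemma scl_scl (a b : ℝ) (ρ : Measure E) : scl a (scl b ρ) = scl (a * b) ρ := by
  unfold scl
  rw [Measure.map_map (by fun_prop) (by fun_prop)]
  congr 1; ext x; simp [mul_smul]

lemma scl_one (ρ : Measure E) : scl 1 ρ = ρ := by
  unfold scl; simp

lemma scl_zero_conv (ρ γ : Measure E) [IsProbabilityMeasure ρ] [IsProbabilityMeasure γ] :
    Measure.conv (scl 0 ρ) γ = γ := by
  have : scl 0 ρ = Measure.dirac 0 := by
    unfold scl; simp [Measure.map_const]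
  rw [this, Measure.dirac_zero_conv]

/-- Rotation invariance. -/
def RotInv (γ : Measure E) : Prop :=
  ∀ p q : ℝ, p ^ 2 + q ^ 2 = 1 → Measure.map (rot p q) (γ.prod γ) = γ.prod γ

variable {γ : Measure E} [IsProbabilityMeasure γ]

lemma RotInv.stable1 (h : RotInv γ) (p q : ℝ) (hpq : p ^ 2 + q ^ 2 = 1) :
    Measure.conv (scl p γ) (scl q γ) = γ := by
  rw [← ou_eq_conv]
  have h1 := congrArg (Measure.map Prod.fst) (h p (-q) (by simpa using hpq))
  rw [Measure.map_map measurable_fst (measurable_rot _ _), Measure.map_fst_prod, measure_univ, one_smul] at h1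
  refine Eq.trans ?_ h1
  unfold ou
  congr 1; ext z; simp [rot]

lemma RotInv.stable (h : RotInv γ) (b c e : ℝ) (hbc : b ^ 2 + c ^ 2 = e ^ 2) :
    Measure.conv (scl b γ) (scl c γ) = scl e γ := by
  rcases eq_or_ne e 0 with rfl | he
  · have hb : b = 0 := by nlinarith [sq_nonneg b, sq_nonneg c]
    have hc : c = 0 := by nlinarith [sq_nonneg b, sq_nonneg c]
    rw [hb, hc, scl_zero_conv]
  · have := h.stable1 (b / e) (c / e) (by field_simp; exact hbc)
    conv_rhs => rw [← this]
    rw [scl_conv, scl_scl, scl_scl]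
    congr 2 <;> field_simp

variable {ρ : Measure E} [IsProbabilityMeasure ρ]

/-- Semigroup property. -/
lemma RotInv.ou_ou (h : RotInv γ) (a b c e f : ℝ) (hf : (c * b) ^ 2 + e ^ 2 = f ^ 2) :
    ou (ou ρ γ a b) γ c e = ou ρ γ (c * a) f := by
  simp only [ou_eq_conv]
  rw [scl_conv, Measure.conv_assoc, scl_scl, scl_scl, h.stable _ _ f hf]

lemma RotInv.ou_self (h : RotInv γ) (p q : ℝ) (hpq : p ^ 2 + q ^ 2 = 1) : ou γ γ p q = γ := by
  rw [ou_eq_conv, h.stable1 p q hpq]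

lemma ou_one_zero : ou ρ γ 1 0 = ρ := by
  rw [ou_eq_conv, Measure.conv_comm, scl_zero_conv, scl_one]

lemma RotInv.three (h : RotInv γ) (a b c f : ℝ) (hf : b ^ 2 + c ^ 2 = f ^ 2) :
    (γ.prod (ρ.prod γ)).map (fun z => b • z.1 + (a • z.2.1 + c • z.2.2)) = ou ρ γ a f := by
  have : (fun z : E × E × E => b • z.1 + (a • z.2.1 + c • z.2.2))
    = (fun p : E × E => p.1 + p.2) ∘
      (Prod.map (fun x => b • x) (fun p : E × E => a • p.1 + c • p.2)) := rfl
  rw [this, ← Measure.map_map (by fun_prop) (by fun_prop),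
    ← Measure.map_prod_map _ _ (by fun_prop) (by fun_prop)]
  change Measure.conv (scl b γ) (ou ρ γ a c) = _
  rw [ou_eq_conv, ou_eq_conv, Measure.conv_comm, Measure.conv_assoc, h.stable c b f (by linarith)]

variable [StandardBorelSpace E]

lemma RotInv.kl_mono (h : RotInv γ) (p q : ℝ) (hpq : p ^ 2 + q ^ 2 = 1) :
    klDiv (ou ρ γ p q) γ ≤ klDiv ρ γ := by
  have h1 := klDiv_map_le (ρ.prod γ) (γ.prod γ)
    (g := fun p' : E × E => p • p'.1 + q • p'.2) (by fun_prop)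
  rw [klDiv_prod_same] at h1
  have h2 := h.ou_self p q hpq
  unfold ou at h2
  rw [h2] at h1
  exact h1

/-- Three-block supermodularity. -/
lemma RotInv.kl_convex (h : RotInv γ) (p q p' q' : ℝ) (h1 : p ^ 2 + q ^ 2 = 1)
    (h2 : p' ^ 2 + q' ^ 2 = 1) (h3 : q = q' * p) (f : ℝ) (hf : (p' * p) ^ 2 + f ^ 2 = 1) :
    klDiv (ou ρ γ p q) γ + klDiv (ou ρ γ p q) γ
      ≤ klDiv ρ γ + klDiv (ou ρ γ (p' * p) f) γ := by
  -- the rotation of three blocks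
  let M : E × E × E → (E × E) × E := fun z =>
    Prod.map (rot p' (-q')) id (MeasurableEquiv.prodAssoc.symm (Prod.map id (rot p q) z))
  have hMm : Measurable M :=
    ((measurable_rot _ _).prodMap measurable_id).comp
      (MeasurableEquiv.prodAssoc.symm.measurable.comp
        (measurable_id.prodMap (measurable_rot _ _)))
  have hM : ∀ z, M z = ((p' • z.1 + q' • (p • z.2.1 - q • z.2.2),
      -(q' • z.1) + p' • (p • z.2.1 - q • z.2.2)), q • z.2.1 + p • z.2.2) := by
    intro z
    simp [M, rot, MeasurableEquiv.prodAssoc]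
  have hMP : (γ.prod (γ.prod γ)).map M = (γ.prod γ).prod γ := by
    have e1 : MeasurePreserving (Prod.map id (rot p q)) (γ.prod (γ.prod γ)) (γ.prod (γ.prod γ)) :=
      (MeasurePreserving.id γ).prod ⟨measurable_rot _ _, h p q h1⟩
    have e2 : MeasurePreserving (MeasurableEquiv.prodAssoc (α := E) (β := E) (γ := E)).symm
        (γ.prod (γ.prod γ)) ((γ.prod γ).prod γ) :=
      (measurePreserving_prodAssoc γ γ γ).symm
    have e3 : MeasurePreserving (Prod.map (rot p' (-q')) id) ((γ.prod γ).prod γ)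
        ((γ.prod γ).prod γ) :=
      MeasurePreserving.prod ⟨measurable_rot _ _, h p' (-q') (by simpa using h2)⟩
        (MeasurePreserving.id γ)
    exact (e3.comp (e2.comp e1)).map_eq
  set P0 := γ.prod (ρ.prod γ) with hP0
  let P := P0.map M
  have : IsProbabilityMeasure P := Measure.isProbabilityMeasure_map hMm.aemeasurable
  have hKL : klDiv P ((γ.prod γ).prod γ) ≤ klDiv ρ γ := by
    rw [← hMP]
    refine (klDiv_map_le _ _ hMm).trans ?_
    rw [hP0, ← Measure.prod_swap (μ := ρ.prod γ) (ν := γ),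
      ← Measure.prod_swap (μ := γ.prod γ) (ν := γ)]
    refine (klDiv_map_le _ _ measurable_swap).trans ?_
    rw [klDiv_prod_same, klDiv_prod_same]
  have hs := klDiv_supermod P γ γ γ
  have hA : P.map (fun p => p.1.2) = ou ρ γ (p' * p) f := by
    rw [← h.three (p' * p) (-q') (-(p' * q)) f (by linear_combination h2 + p' ^ 2 * h1 - hf),
      Measure.map_map (by fun_prop) hMm]
    congr 1
    ext z
    simp only [Function.comp, hM]
    module
  have hB : klDiv (ou ρ γ p q) γ ≤ klDiv (P.map (fun p => p.1)) (γ.prod γ) := by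
    have e := klDiv_map_le (P.map (fun p => p.1)) (γ.prod γ)
      (g := fun z : E × E => q' • z.1 + p' • z.2) (by fun_prop)
    have e1 : (γ.prod γ).map (fun z : E × E => q' • z.1 + p' • z.2) = γ :=
      h.ou_self q' p' (by linarith)
    rw [e1, Measure.map_map (by fun_prop) (by fun_prop),
      Measure.map_map (by fun_prop) hMm] at e
    convert e using 2
    rw [← h.three p 0 (-q) q (by ring)]
    congr 1
    ext z
    simp only [Function.comp, hM]
    match_scalars
    · ring
    · linear_combination (-p) * h2
    · linear_combination q * h2
  have hC : klDiv (ou ρ γ p q) γ ≤ klDiv (P.map (fun p => (p.1.2, p.2))) (γ.prod γ) := by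
    have e := klDiv_map_le (P.map (fun p => (p.1.2, p.2))) (γ.prod γ)
      (g := fun z : E × E => p' • z.1 + q' • z.2) (by fun_prop)
    have e1 : (γ.prod γ).map (fun z : E × E => p' • z.1 + q' • z.2) = γ :=
      h.ou_self p' q' h2
    rw [e1, Measure.map_map (by fun_prop) (by fun_prop),
      Measure.map_map (by fun_prop) hMm] at e
    convert e using 2
    rw [← h.three p (-(p' * q')) (q' * p - p' ^ 2 * q) q (by
      subst h3
      linear_combination (q' ^ 2 - q' ^ 2 * p ^ 2 * (1 - p' ^ 2 + q' ^ 2)) * h2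
        - q' ^ 2 * (1 - q' ^ 2) * h1)]
    congr 1
    ext z
    simp only [Function.comp, hM]
    match_scalars
    · ring
    · subst h3
      linear_combination (-p) * h2
    · ring
  calc _ ≤ _ := add_le_add hB hC
    _ ≤ _ := hs
    _ ≤ _ := by rw [hA]; gcongr

/-- Relative entropy along the flow, parametrised by the squared correlation `r`. -/
noncomputable def Phi (ρ γ : Measure E) (r : ℝ) : ℝ≥0∞ := klDiv (ou ρ γ (√r) (√(1 - r))) γ

lemma RotInv.ou_comp (h : RotInv γ) {s θ : ℝ} (hs0 : 0 ≤ s) (hs : s ≤ 1) (ht0 : 0 ≤ θ)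
    (ht : θ ≤ 1) :
    ou (ou ρ γ (√s) (√(1 - s))) γ (√θ) (√(1 - θ)) = ou ρ γ (√(θ * s)) (√(1 - θ * s)) := by
  rw [Real.sqrt_mul ht0]
  apply h.ou_ou
  have : θ * s ≤ 1 := mul_le_one₀ ht hs0 hs
  rw [mul_pow, Real.sq_sqrt ht0, Real.sq_sqrt (by linarith), Real.sq_sqrt (by linarith),
    Real.sq_sqrt (by linarith)]
  ring

lemma RotInv.Phi_mono (h : RotInv γ) {r s : ℝ} (hr : 0 ≤ r) (hrs : r ≤ s) (hs : s ≤ 1) :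
    Phi ρ γ r ≤ Phi ρ γ s := by
  rcases hr.eq_or_lt with rfl | hr'
  · have : ou ρ γ (√0) (√(1 - 0)) = γ := by
      simp [ou_eq_conv, scl_zero_conv, scl_one]
    rw [Phi, this, klDiv_self]
    exact zero_le
  have hs0 : 0 < s := by linarith
  have hle : r / s ≤ 1 := by rw [div_le_one hs0]; exact hrs
  have e := h.ou_comp (ρ := ρ) hs0.le hs (θ := r / s) (by positivity) hle
  rw [div_mul_cancel₀ _ hs0.ne'] at e
  rw [Phi, ← e]
  apply h.kl_mono
  rw [Real.sq_sqrt (by positivity), Real.sq_sqrt (by linarith)]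
  ring

lemma RotInv.Phi_step (h : RotInv γ) (k n : ℕ) (hk : k + 2 ≤ n) :
    Phi ρ γ ((k + 1 : ℕ) / (n : ℝ)) + Phi ρ γ ((k + 1 : ℕ) / (n : ℝ))
      ≤ Phi ρ γ ((k + 2 : ℕ) / (n : ℝ)) + Phi ρ γ ((k : ℕ) / (n : ℝ)) := by
  have hn : (0 : ℝ) < n := by exact_mod_cast (by omega : 0 < n)
  have hkn : ((k : ℝ) + 2) ≤ n := by exact_mod_cast hk
  have hk0 : (0 : ℝ) ≤ k := by positivity
  set s : ℝ := ((k + 2 : ℕ) / (n : ℝ)) with hs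
  have hs0 : 0 ≤ s := by positivity
  have hs1 : s ≤ 1 := by rw [hs, div_le_one hn]; push_cast; exact hkn
  set θ : ℝ := ((k : ℝ) + 1) / (k + 2) with hθ
  have hθ0 : 0 ≤ θ := by positivity
  have hθ1 : θ ≤ 1 := by rw [hθ, div_le_one (by positivity)]; linarith
  set η : ℝ := (k : ℝ) / (k + 1) with hη
  have hη0 : 0 ≤ η := by positivity
  have hη1 : η ≤ 1 := by rw [hη, div_le_one (by positivity)]; linarith
  have hηθ : η * θ ≤ 1 := mul_le_one₀ hη1 hθ0 hθ1
  have key := h.kl_convex (ρ := ou ρ γ (√s) (√(1 - s))) (√θ) (√(1 - θ)) (√η) (√(1 - η))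
    (by rw [Real.sq_sqrt hθ0, Real.sq_sqrt (by linarith)]; ring)
    (by rw [Real.sq_sqrt hη0, Real.sq_sqrt (by linarith)]; ring)
    (by
      rw [← Real.sqrt_mul (by linarith)]
      congr 1
      rw [hθ, hη]; field_simp; ring) (√(1 - η * θ))
    (by rw [← Real.sqrt_mul hη0, Real.sq_sqrt (by positivity), Real.sq_sqrt (by linarith)]; ring)
  rw [← Real.sqrt_mul hη0, h.ou_comp hs0 hs1 hθ0 hθ1,
    h.ou_comp hs0 hs1 (by positivity) hηθ] at key
  have e1 : θ * s = ((k + 1 : ℕ) / (n : ℝ)) := by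
    rw [hθ, hs]; push_cast; field_simp
  have e2 : η * θ * s = ((k : ℕ) / (n : ℝ)) := by
    rw [hη, mul_assoc, e1]; push_cast; field_simp
  rw [e1, e2] at key
  exact key

lemma convex_seq (n : ℕ) (g : ℕ → ℝ) (h0 : g 0 = 0)
    (hg : ∀ k, k + 2 ≤ n → g (k + 1) + g (k + 1) ≤ g (k + 2) + g k) (m : ℕ) (hm : m ≤ n) :
    n * g m ≤ m * g n := by
  have h1 : ∀ k, k + 1 ≤ n → ((k : ℝ) + 1) * g k ≤ k * g (k + 1) := by
    intro k
    induction k with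
    | zero => intro _; simp [h0]
    | succ k ih =>
      intro hk
      have a := ih (by omega)
      have b := hg k (by omega)
      have hk0 : (0 : ℝ) ≤ k := by positivity
      push_cast
      nlinarith
  obtain rfl | hm0 := Nat.eq_zero_or_pos m
  · simp [h0]
  have h2 : ∀ j, m ≤ j → j ≤ n → (j : ℝ) * g m ≤ m * g j := by
    intro j hj
    induction j, hj using Nat.le_induction with
    | base => intro _; exact le_rfl
    | succ j hj ih =>
      intro hjn
      have a := ih (by omega)
      have b := h1 j hjn
      have hj0 : (0 : ℝ) < j := by exact_mod_cast (by omega : 0 < j)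
      have hm0' : (0 : ℝ) < m := by exact_mod_cast hm0
      push_cast
      have c1 : ((j : ℝ) + 1) * (j * g m) ≤ (j + 1) * (m * g j) := by gcongr
      have c2 : (m : ℝ) * ((j + 1) * g j) ≤ m * (j * g (j + 1)) := by gcongr
      have c3 : (j : ℝ) * ((j + 1) * g m) ≤ j * (m * g (j + 1)) := by linarith
      exact le_of_mul_le_mul_left c3 hj0
  exact h2 n hm le_rfl

lemma Phi_one : Phi ρ γ 1 = klDiv ρ γ := by
  simp [Phi, ou_one_zero]

lemma RotInv.Phi_le (h : RotInv γ) {r c : ℝ} (hr : 0 ≤ r) (hrc : r ≤ c) (hc0 : 0 < c)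
    (hex : ∃ m n : ℕ, 0 < n ∧ m ≤ n ∧ r ≤ (m : ℝ) / n ∧ (m : ℝ) / n ≤ c) :
    Phi ρ γ r ≤ ENNReal.ofReal c * klDiv ρ γ := by
  obtain ⟨m, n, hn, hmn, h1, h2⟩ := hex
  by_cases htop : klDiv ρ γ = ∞
  · rw [htop, ENNReal.mul_top (by simpa using hc0)]; exact le_top
  have hn' : (0 : ℝ) < n := by exact_mod_cast hn
  have hle1 : ∀ k : ℕ, k ≤ n → (k : ℝ) / n ≤ 1 := fun k hk => by
    rw [div_le_one hn']; exact_mod_cast hk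
  have hfin : ∀ k : ℕ, k ≤ n → Phi ρ γ ((k : ℕ) / (n : ℝ)) ≠ ∞ := fun k hk =>
    ne_top_of_le_ne_top htop
      ((h.Phi_mono (by positivity) (hle1 k hk) le_rfl).trans_eq Phi_one)
  let g : ℕ → ℝ := fun k => (Phi ρ γ ((k : ℕ) / (n : ℝ))).toReal
  have hgn : g n = (klDiv ρ γ).toReal := by
    simp only [g]; rw [div_self hn'.ne', Phi_one]
  have hg0 : g 0 = 0 := by
    simp [g, Phi, ou_eq_conv, scl_zero_conv, scl_one]
  have key := convex_seq n g hg0 (fun k hk => by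
    simp only [g]
    rw [← ENNReal.toReal_add (hfin _ (by omega)) (hfin _ (by omega)),
      ← ENNReal.toReal_add (hfin _ (by omega)) (hfin _ (by omega))]
    exact ENNReal.toReal_mono (ENNReal.add_ne_top.2 ⟨hfin _ hk, hfin k (by omega)⟩) (h.Phi_step k n hk)) m hmn
  refine (h.Phi_mono hr h1 (hle1 m hmn)).trans ?_
  have e1 : Phi ρ γ ((m : ℕ) / (n : ℝ)) = ENNReal.ofReal (g m) :=
    (ENNReal.ofReal_toReal (hfin m hmn)).symm
  rw [e1, ← ENNReal.ofReal_toReal htop, ← ENNReal.ofReal_mul hc0.le]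
  apply ENNReal.ofReal_le_ofReal
  rw [← hgn]
  have hgn0 : 0 ≤ g n := ENNReal.toReal_nonneg
  calc g m ≤ (m : ℝ) / n * g n := by
        rw [div_mul_eq_mul_div, le_div_iff₀ hn']; linarith
    _ ≤ c * g n := by gcongr

lemma exists_frac (t : ℝ) (ht : 0 ≤ t) :
    ∃ m n : ℕ, 0 < n ∧ m ≤ n ∧ rexp (-t) ≤ (m : ℝ) / n ∧ (m : ℝ) / n ≤ rexp (-t / 2) := by
  rcases ht.eq_or_lt with rfl | ht
  · exact ⟨1, 1, by norm_num, le_rfl, by simp, by simp⟩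
  obtain ⟨q, hq1, hq2⟩ := exists_rat_btwn (Real.exp_lt_exp.2 (by linarith : -t < -t / 2))
  have hq0 : (0 : ℝ) < q := (Real.exp_pos _).trans hq1
  have hq0' : 0 < q := by exact_mod_cast hq0
  have hnum : (q.num.toNat : ℝ) = q.num := by
    exact_mod_cast Int.toNat_of_nonneg (Rat.num_pos.2 hq0').le
  have hqe : (q.num.toNat : ℝ) / q.den = q := by
    rw [hnum]; exact (Rat.cast_def q).symm
  refine ⟨q.num.toNat, q.den, q.pos, ?_, by rw [hqe]; exact hq1.le, by rw [hqe]; exact hq2.le⟩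
  have : (q : ℝ) ≤ 1 := hq2.le.trans (by rw [Real.exp_le_one_iff]; linarith)
  rw [← hqe, div_le_one (by exact_mod_cast q.pos)] at this
  exact_mod_cast this
end laws

section gauss

lemma det_rot {E : Type*} [NormedAddCommGroup E] [NormedSpace ℝ E] [FiniteDimensional ℝ E]
    (T : ℝ → ℝ → (E × E →ₗ[ℝ] E × E)) (hT : ∀ p q z, T p q z = rot p q z) (p q : ℝ)
    (hpq : p ^ 2 + q ^ 2 = 1) : |LinearMap.det (T p q)| = 1 := by
  let σ : E × E →ₗ[ℝ] E × E := LinearMap.prodMap LinearMap.id (-LinearMap.id)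
  have hσ : σ ∘ₗ σ = LinearMap.id := by
    ext z <;> simp [σ]
  have h1 : T p q ∘ₗ (σ ∘ₗ T p q ∘ₗ σ) = LinearMap.id := by
    apply LinearMap.ext
    rintro ⟨x, y⟩
    simp only [LinearMap.comp_apply, hT, σ, rot, LinearMap.prodMap_apply, LinearMap.id_apply,
      LinearMap.neg_apply, Prod.mk.injEq]
    constructor
    · match_scalars
      · linear_combination hpq
      · ring
    · match_scalars
      · ring
      · linear_combination hpq
  have h2 := congrArg LinearMap.det h1
  have h3 := congrArg LinearMap.det hσ
  simp only [LinearMap.det_comp, LinearMap.det_id] at h2 h3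
  have h4 : LinearMap.det (T p q) ^ 2 = 1 := by
    linear_combination h2 - LinearMap.det (T p q) ^ 2 * h3
  exact (pow_eq_one_iff_of_nonneg (abs_nonneg _) two_ne_zero).1 (by rw [sq_abs]; exact h4)

lemma rotInv_withDensity {E : Type*} [NormedAddCommGroup E] [NormedSpace ℝ E]
    [FiniteDimensional ℝ E] [MeasurableSpace E] [BorelSpace E]
    (vol : Measure E) [vol.IsAddHaarMeasure] (f : E → ℝ≥0∞) (hf : Measurable f)
    (hprob : IsProbabilityMeasure (vol.withDensity f))
    (hinv : ∀ p q : ℝ, p ^ 2 + q ^ 2 = 1 → ∀ z : E × E,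
      f (rot p q z).1 * f (rot p q z).2 = f z.1 * f z.2) :
    RotInv (vol.withDensity f) := by
  have := FiniteDimensional.proper_real E
  have : SecondCountableTopology E := inferInstance
  intro p q hpq
  let T : ℝ → ℝ → (E × E →ₗ[ℝ] E × E) := fun p q =>
    { toFun := rot p q
      map_add' := fun x y => by
        simp only [rot, Prod.fst_add, Prod.snd_add, smul_add, Prod.mk_add_mk, Prod.mk.injEq]
        constructor <;> abel
      map_smul' := fun c x => by
        simp only [rot, Prod.smul_fst, Prod.smul_snd, Prod.smul_mk, Prod.mk.injEq, RingHom.id_apply]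
        constructor <;> module }
  have hdet := det_rot T (fun _ _ _ => rfl) p q hpq
  have hvol : Measure.map (rot p q) (vol.prod vol) = vol.prod vol := by
    have e := Measure.map_linearMap_addHaar_eq_smul_addHaar (vol.prod vol) (f := T p q)
      (by intro h0; simp [h0] at hdet)
    rw [abs_inv, hdet] at e
    rw [inv_one, ENNReal.ofReal_one, one_smul] at e
    exact e
  have hprod := prod_withDensity (μ := vol) (ν := vol) hf hf
  rw [hprod]
  set F : E × E → ℝ≥0∞ := fun z => f z.1 * f z.2 with hF
  have hFm : Measurable F := by fun_prop
  ext s hs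
  rw [Measure.map_apply (measurable_rot _ _) hs, withDensity_apply _ (measurable_rot p q hs),
    withDensity_apply _ hs]
  conv_rhs => rw [← hvol]
  rw [setLIntegral_map hs hFm (measurable_rot p q)]
  refine lintegral_congr fun z => ?_
  exact (hinv p q hpq z).symm

open scoped MatrixOrder in
lemma exists_factor {d : ℕ} (A : Matrix (Fin d) (Fin d) ℝ) (hA : A.PosSemidef) :
    ∃ S : Matrix (Fin d) (Fin d) ℝ, A = S.conjTranspose * S := by
  obtain ⟨X, hX, -, rfl⟩ :=
    CFC.exists_sqrt_of_isSelfAdjoint_of_quasispectrumRestricts hA.isHermitian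
      (QuasispectrumRestricts.nnreal_of_nonneg hA.nonneg)
  exact ⟨X, by rw [← Matrix.star_eq_conjTranspose, hX.star_eq]⟩

lemma exists_sqrt {d : ℕ} (C : Matrix (Fin d) (Fin d) ℝ) (hC : C.PosDef) :
    ∃ T : EuclideanSpace ℝ (Fin d) →ₗ[ℝ] EuclideanSpace ℝ (Fin d),
      (∀ x : EuclideanSpace ℝ (Fin d), ⟪x, toEuc (Matrix.mulVec C⁻¹ x)⟫ = ‖T x‖ ^ 2) ∧
      LinearMap.det T ≠ 0 ∧ C.det ^ (-(1 : ℝ) / 2) = |LinearMap.det T| := by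
  have hinv := hC.inv
  obtain ⟨S, hS⟩ := exists_factor C⁻¹ hinv.posSemidef
  have hdet : S.det ^ 2 = C.det⁻¹ := by
    have := congrArg Matrix.det hS
    rw [Matrix.det_mul, Matrix.det_conjTranspose, Matrix.det_nonsing_inv,
      Ring.inverse_eq_inv'] at this
    rw [this]; simp [sq]
  have hCd := hC.det_pos
  refine ⟨Matrix.toEuclideanLin S, fun x => ?_, ?_, ?_⟩
  · rw [← real_inner_self_eq_norm_sq, hS, ← Matrix.mulVec_mulVec]
    simp only [toEuc, EuclideanSpace.inner_eq_star_dotProduct, Matrix.ofLp_toLpLin,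
      Matrix.toLin'_apply, star_trivial, Matrix.conjTranspose_eq_transpose_of_trivial]
    rw [Matrix.mulVec_transpose, ← Matrix.dotProduct_mulVec]
  · rw [LinearMap.det_toLpLin]
    intro h0
    rw [h0] at hdet
    have := inv_pos.2 hCd
    simp at hdet
    linarith
  · rw [LinearMap.det_toLpLin, ← Real.sqrt_sq_eq_abs, hdet, Real.sqrt_eq_rpow,
      ← Real.rpow_neg_one, ← Real.rpow_mul hCd.le]
    congr 1; ring

lemma gaussian_prob {d : ℕ} (C : Matrix (Fin d) (Fin d) ℝ) (hC : C.PosDef) :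
    IsProbabilityMeasure (gaussianM C) := by
  obtain ⟨T, hT, hdet, hCdet⟩ := exists_sqrt C hC
  constructor
  unfold gaussianM
  rw [withDensity_apply _ MeasurableSet.univ, Measure.restrict_univ]
  simp only [hT, hCdet]
  have hTm : Measurable T := T.continuous_of_finiteDimensional.measurable
  have hI : ∫ v : EuclideanSpace ℝ (Fin d), rexp (-(1 / 2) * ‖v‖ ^ 2) = (2 * π) ^ ((d : ℝ) / 2) := by
    rw [GaussianFourier.integral_rexp_neg_mul_sq_norm (by norm_num)]
    simp only [finrank_euclideanSpace, Fintype.card_fin]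
    congr 1; ring
  have hpi : (0 : ℝ) < 2 * π := by positivity
  have hInt : Integrable (fun v : EuclideanSpace ℝ (Fin d) => rexp (-(1 / 2) * ‖v‖ ^ 2)) := by
    by_contra h0
    rw [integral_undef h0] at hI
    exact (Real.rpow_pos_of_pos hpi _).ne hI
  have hL : ∫⁻ v : EuclideanSpace ℝ (Fin d), ENNReal.ofReal (rexp (-(1 / 2) * ‖v‖ ^ 2))
      = ENNReal.ofReal ((2 * π) ^ ((d : ℝ) / 2)) := by
    rw [← hI, ofReal_integral_eq_lintegral_ofReal hInt (ae_of_all _ fun _ => (exp_pos _).le)]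
  have hmap := Measure.map_linearMap_addHaar_eq_smul_addHaar
    (volume : Measure (EuclideanSpace ℝ (Fin d))) hdet
  have hK : 0 ≤ (2 * π) ^ (-(d : ℝ) / 2) * |LinearMap.det T| := by positivity
  calc _ = ∫⁻ x, ENNReal.ofReal ((2 * π) ^ (-(d : ℝ) / 2) * |LinearMap.det T|) *
        ENNReal.ofReal (rexp (-(1 / 2) * ‖T x‖ ^ 2)) := by
        refine lintegral_congr fun x => ?_
        rw [← ENNReal.ofReal_mul hK]
        congr 3; ring
    _ = ENNReal.ofReal ((2 * π) ^ (-(d : ℝ) / 2) * |LinearMap.det T|) *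
        ∫⁻ y, ENNReal.ofReal (rexp (-(1 / 2) * ‖y‖ ^ 2)) ∂(Measure.map T volume) := by
        rw [lintegral_const_mul' _ _ ENNReal.ofReal_ne_top, lintegral_map (by fun_prop) hTm]
    _ = 1 := by
        rw [hmap, lintegral_smul_measure, hL, smul_eq_mul, ← ENNReal.ofReal_mul (abs_nonneg _),
          ← ENNReal.ofReal_mul hK, abs_inv, neg_div, Real.rpow_neg hpi.le]
        have h1 := abs_pos.2 hdet
        have h2 := Real.rpow_pos_of_pos hpi ((d : ℝ) / 2)
        rw [← ENNReal.ofReal_one]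
        congr 1
        field_simp

lemma gaussian_rotInv {d : ℕ} (C : Matrix (Fin d) (Fin d) ℝ) (hC : C.PosDef) :
    RotInv (gaussianM C) := by
  have hprob := gaussian_prob C hC
  obtain ⟨T, hT, hdet, hCdet⟩ := exists_sqrt C hC
  have hTm : Measurable T := T.continuous_of_finiteDimensional.measurable
  unfold gaussianM at *
  simp only [hT] at *
  refine rotInv_withDensity _ _ (by fun_prop) hprob ?_
  intro p q hpq z
  have hdp := hC.det_pos
  rw [← ENNReal.ofReal_mul (by positivity), ← ENNReal.ofReal_mul (by positivity)]
  congr 1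
  rw [mul_mul_mul_comm, mul_mul_mul_comm _ _ _ (rexp (-‖T z.2‖ ^ 2 / 2)), ← Real.exp_add,
    ← Real.exp_add]
  congr 2
  simp only [rot, map_add, map_sub, map_smul]
  rw [norm_sub_sq_real, norm_add_sq_real]
  simp only [norm_smul, inner_smul_left, inner_smul_right, mul_pow, Real.norm_eq_abs, sq_abs,
    conj_trivial]
  linear_combination (-(‖T z.1‖ ^ 2 + ‖T z.2‖ ^ 2) / 2) * hpq
end gauss

lemma KLdiv_eq_klDiv {α : Type*} [MeasurableSpace α] (P Q : Measure α) [IsProbabilityMeasure P]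
    [IsProbabilityMeasure Q] : KLdiv P Q = klDiv P Q := by
  rw [KLdiv, klDiv_def]
  simp [llr_def]
end KLOU

/-- Exponential entropy decay along the Ornstein–Uhlenbeck forward noising process:
if `μ_t` is the law of `e^{-t/2} X + √(1-e^{-t}) Z` with `X ~ μ`, `Z ~ γ` independent, then
`KL(μ_t ‖ γ) ≤ e^{-t/2} KL(μ ‖ γ)`. -/
theorem kl_decay_ou (d : ℕ) (hd : 0 < d)
    (C : Matrix (Fin d) (Fin d) ℝ) (hC : C.PosDef)
    (μ : Measure (EuclideanSpace ℝ (Fin d))) [IsProbabilityMeasure μ]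
    (t : ℝ) (ht : 0 ≤ t) :
    KLdiv
        (Measure.map
          (fun p : EuclideanSpace ℝ (Fin d) × EuclideanSpace ℝ (Fin d) =>
            Real.exp (-t / 2) • p.1 + Real.sqrt (1 - Real.exp (-t)) • p.2)
          (μ.prod (gaussianM C)))
        (gaussianM C)
      ≤ ENNReal.ofReal (Real.exp (-t / 2)) * KLdiv μ (gaussianM C) := by
  have hprob := KLOU.gaussian_prob C hC
  have hrot := KLOU.gaussian_rotInv C hC
  have h0 := Real.exp_pos (-t)
  have hle : Real.exp (-t) ≤ Real.exp (-t / 2) := Real.exp_le_exp.2 (by linarith)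
  have key := hrot.Phi_le (ρ := μ) h0.le hle (Real.exp_pos _) (KLOU.exists_frac t ht)
  have hsq : Real.sqrt (Real.exp (-t)) = Real.exp (-t / 2) := (Real.exp_half (-t)).symm
  rw [KLOU.Phi, hsq, ← KLOU.KLdiv_eq_klDiv, ← KLOU.KLdiv_eq_klDiv] at key
  exact key
end

section
/- Let ρ₀ : ℝᵈ → ℝ be smooth, bounded above and below by positive constants, with bounded first and second partial derivatives, and with ∫ ρ₀ dγ = 1. For t ≥ 0 set ρ_t := P_t ρ₀. Then the function t ↦ ∫_{ℝᵈ} ρ_t(x) log ρ_t(x) dγ(x) is differentiable on (0,∞) and its derivative at t equals −(1/2) ∫_{ℝᵈ} ⟨C ∇ρ_t(x), ∇ρ_t(x)⟩ / ρ_t(x) dγ(x). (The entropy-dissipation (de Bruijn) identity used in the proof of the paper's Theorem 4: the time derivative of the relative entropy along the Ornstein–Uhlenbeck flow equals minus the relative Fisher information.) -/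
open MeasureTheory Real
open scoped ENNReal RealInnerProductSpace

/-- The Ornstein–Uhlenbeck (Mehler) semigroup associated to the measure `γ`:
`P_t f (x) = ∫ f (e^{-t/2} x + √(1 - e^{-t}) z) dγ(z)`. -/
noncomputable def OU {k : ℕ} (γ : Measure (EuclideanSpace ℝ (Fin k))) (t : ℝ)
    (f : EuclideanSpace ℝ (Fin k) → ℝ) (x : EuclideanSpace ℝ (Fin k)) : ℝ :=
  ∫ z, f (Real.exp (-t / 2) • x + Real.sqrt (1 - Real.exp (-t)) • z) ∂γ


/-- The linear map of a matrix on Euclidean space. -/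
noncomputable abbrev clm {d : ℕ} (C : Matrix (Fin d) (Fin d) ℝ) :
    EuclideanSpace ℝ (Fin d) →L[ℝ] EuclideanSpace ℝ (Fin d) :=
  Matrix.toEuclideanCLM (n := Fin d) (𝕜 := ℝ) C

/-- The Gaussian density. -/
noncomputable def gdens {d : ℕ} (C : Matrix (Fin d) (Fin d) ℝ) (x : EuclideanSpace ℝ (Fin d)) : ℝ :=
  ((2 * π) ^ (-(d : ℝ) / 2) * C.det ^ (-(1 : ℝ) / 2) * Real.exp (-(⟪x, clm C⁻¹ x⟫) / 2))

lemma gaussianM_eq {d : ℕ} (C : Matrix (Fin d) (Fin d) ℝ) :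
    gaussianM C = volume.withDensity (fun x => ENNReal.ofReal (gdens C x)) := rfl

lemma gdens_nonneg {d : ℕ} {C : Matrix (Fin d) (Fin d) ℝ} (hC : C.PosDef)
    (x : EuclideanSpace ℝ (Fin d)) : 0 ≤ gdens C x := by
  have := hC.det_pos
  unfold gdens
  positivity

lemma gdens_cont {d : ℕ} (C : Matrix (Fin d) (Fin d) ℝ) : Continuous (gdens C) := by
  unfold gdens
  fun_prop

lemma clm_symm {d : ℕ} {C : Matrix (Fin d) (Fin d) ℝ} (hC : C.IsHermitian)
    (x y : EuclideanSpace ℝ (Fin d)) : ⟪x, clm C y⟫ = ⟪clm C x, y⟫ := by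
  have hT : C.transpose = C := by
    rw [← Matrix.conjTranspose_eq_transpose_of_trivial]; exact hC.eq
  rw [real_inner_comm y, Matrix.inner_toEuclideanCLM, Matrix.inner_toEuclideanCLM,
    Matrix.dotProduct_mulVec, ← Matrix.mulVec_transpose, hT, dotProduct_comm]

lemma gdens_hasFDerivAt {d : ℕ} {C : Matrix (Fin d) (Fin d) ℝ} (hC : C.PosDef)
    (x : EuclideanSpace ℝ (Fin d)) :
    HasFDerivAt (gdens C) (-(gdens C x) • innerSL ℝ (clm C⁻¹ x)) x := by
  have h1 : HasFDerivAt (fun x : EuclideanSpace ℝ (Fin d) => ⟪x, clm C⁻¹ x⟫) _ x :=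
    HasFDerivAt.inner ℝ (hasFDerivAt_id x) (clm C⁻¹).hasFDerivAt
  have h2 := (((h1.neg.mul_const (1/2 : ℝ))).exp).const_mul
    ((2 * π) ^ (-(d : ℝ) / 2) * C.det ^ (-(1 : ℝ) / 2))
  have h3 : gdens C = fun x => (2 * π) ^ (-(d : ℝ) / 2) * C.det ^ (-(1 : ℝ) / 2) *
      Real.exp (-(⟪x, clm C⁻¹ x⟫) * (1/2)) := by
    ext x; simp [gdens, div_eq_mul_inv]
  rw [h3]
  refine h2.congr_fderiv ?_
  ext v
  have hs := clm_symm hC.inv.1 x v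
  simp [fderivInnerCLM_apply]
  rw [hs, real_inner_comm v]
  ring

lemma exists_lower {d : ℕ} {C : Matrix (Fin d) (Fin d) ℝ} (hC : C.PosDef) :
    ∃ l > 0, ∀ x : EuclideanSpace ℝ (Fin d), l * ‖x‖ ^ 2 ≤ ⟪x, clm C x⟫ := by
  have hpos : ∀ x : EuclideanSpace ℝ (Fin d), x ≠ 0 → 0 < ⟪x, clm C x⟫ := by
    intro x hx
    rw [Matrix.inner_toEuclideanCLM]
    have := hC.dotProduct_mulVec_pos (x := x.ofLp) (by simpa using hx)
    simpa using this
  rcases (Metric.sphere (0 : EuclideanSpace ℝ (Fin d)) 1).eq_empty_or_nonempty with he | hne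
  · refine ⟨1, one_pos, fun x => ?_⟩
    have : x = 0 := by
      by_contra hx
      have : (‖x‖⁻¹ • x) ∈ Metric.sphere (0 : EuclideanSpace ℝ (Fin d)) 1 := by
        simp [norm_smul, hx]
      simp [he] at this
    simp [this]
  · obtain ⟨y, hy, hmin⟩ := (isCompact_sphere (0 : EuclideanSpace ℝ (Fin d)) 1).exists_isMinOn hne
      (f := fun x => ⟪x, clm C x⟫) (by fun_prop)
    have hy0 : y ≠ 0 := by rintro rfl; simp at hy
    refine ⟨_, hpos y hy0, fun x => ?_⟩
    by_cases hx : x = 0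
    · simp [hx]
    have hm : (‖x‖⁻¹ • x) ∈ Metric.sphere (0 : EuclideanSpace ℝ (Fin d)) 1 := by
      simp [norm_smul, hx]
    have h := hmin hm
    simp only [Set.mem_ofPred_eq, map_smul, inner_smul_left, inner_smul_right] at h
    have hn : 0 < ‖x‖ := norm_pos_iff.mpr hx
    simp only [RCLike.conj_to_real] at h
    calc _ ≤ (‖x‖⁻¹ * (‖x‖⁻¹ * ⟪x, clm C x⟫)) * ‖x‖ ^ 2 := by gcongr
      _ = _ := by field_simp

lemma gdens_bound {d : ℕ} {C : Matrix (Fin d) (Fin d) ℝ} (hC : C.PosDef) :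
    ∃ l > 0, ∃ K, ∀ x : EuclideanSpace ℝ (Fin d), (1 + ‖x‖) * gdens C x ≤ K * rexp (- l * ‖x‖ ^ 2) := by
  obtain ⟨l, hl, h⟩ := exists_lower hC.inv
  have hdet := hC.det_pos
  set K : ℝ := (2 * π) ^ (-(d : ℝ) / 2) * C.det ^ (-(1 : ℝ) / 2) with hK
  have hKpos : 0 ≤ K := by positivity
  refine ⟨l / 4, by positivity, K * rexp (1 / l), fun x => ?_⟩
  have h1 : 1 + ‖x‖ ≤ rexp ‖x‖ := by linarith [Real.add_one_le_exp ‖x‖]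
  calc (1 + ‖x‖) * gdens C x ≤ rexp ‖x‖ * (K * rexp (-(l * ‖x‖ ^ 2) / 2)) := by
        unfold gdens
        gcongr
        exact h x
    _ = K * rexp (‖x‖ -(l * ‖x‖ ^ 2) / 2) := by rw [sub_eq_add_neg, Real.exp_add]; ring_nf
    _ ≤ K * rexp (1 / l + (- (l / 4) * ‖x‖ ^ 2)) := by
        gcongr
        have : 0 ≤ l * (‖x‖ / 2 - 1 / l) ^ 2 := by positivity
        have e : l * (‖x‖ / 2 - 1 / l) ^ 2 = l * ‖x‖^2 / 4 - ‖x‖ + 1 / l := by field_simp; ring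
        linarith
    _ = _ := by rw [Real.exp_add]; ring

lemma integrable_gdens {d : ℕ} {C : Matrix (Fin d) (Fin d) ℝ} (hC : C.PosDef) :
    Integrable (fun x : EuclideanSpace ℝ (Fin d) => (1 + ‖x‖) * gdens C x) := by
  obtain ⟨l, hl, K, h⟩ := gdens_bound hC
  have h1 := (GaussianFourier.integrable_cexp_neg_mul_sq_norm_add (V := EuclideanSpace ℝ (Fin d))
    (b := (l : ℂ)) (by simpa) 0 0).norm.const_mul K
  refine h1.mono' (by have := gdens_cont C; exact (by fun_prop : Continuous _).aestronglyMeasurable) ?_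
  refine .of_forall fun x => ?_
  rw [Real.norm_of_nonneg (mul_nonneg (by positivity) (gdens_nonneg hC x))]
  refine (h x).trans (le_of_eq ?_)
  rw [Complex.norm_exp]
  norm_cast
  simp

lemma integrable_gaussianM_iff {d : ℕ} {C : Matrix (Fin d) (Fin d) ℝ} (hC : C.PosDef)
    (g : EuclideanSpace ℝ (Fin d) → ℝ) :
    Integrable g (gaussianM C) ↔ Integrable (fun x => g x * gdens C x) := by
  rw [gaussianM_eq, integrable_withDensity_iff_integrable_smul'
    (gdens_cont C).measurable.ennreal_ofReal (by simp)]
  simp [ENNReal.toReal_ofReal (gdens_nonneg hC _), mul_comm]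

lemma integral_gaussianM {d : ℕ} {C : Matrix (Fin d) (Fin d) ℝ} (hC : C.PosDef)
    (g : EuclideanSpace ℝ (Fin d) → ℝ) :
    ∫ x, g x ∂(gaussianM C) = ∫ x, g x * gdens C x := by
  rw [gaussianM_eq, integral_withDensity_eq_integral_toReal_smul
    (gdens_cont C).measurable.ennreal_ofReal (by simp)]
  simp [ENNReal.toReal_ofReal (gdens_nonneg hC _), mul_comm]

lemma integrable_oan {d : ℕ} {C : Matrix (Fin d) (Fin d) ℝ} (hC : C.PosDef) :
    Integrable (fun x : EuclideanSpace ℝ (Fin d) => 1 + ‖x‖) (gaussianM C) :=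
  (integrable_gaussianM_iff hC _).2 (integrable_gdens hC)

lemma isFinite_gaussianM {d : ℕ} {C : Matrix (Fin d) (Fin d) ℝ} (hC : C.PosDef) :
    IsFiniteMeasure (gaussianM C) := by
  have h : Integrable (fun x : EuclideanSpace ℝ (Fin d) => (1 : ℝ)) (gaussianM C) := by
    refine (integrable_oan hC).mono' (by fun_prop) (.of_forall fun x => ?_)
    simp
  rcases (integrable_const_iff).1 h with h | h
  · simp at h
  · exact h

/-- Scalar Gaussian integration by parts. -/
lemma ibp_scalar {d : ℕ} {C : Matrix (Fin d) (Fin d) ℝ} (hC : C.PosDef)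
    (g : EuclideanSpace ℝ (Fin d) → ℝ) (hg : Differentiable ℝ g) (B : ℝ)
    (hB : ∀ x, |g x| ≤ B) (hB' : ∀ x, ‖fderiv ℝ g x‖ ≤ B) (v : EuclideanSpace ℝ (Fin d)) :
    ∫ x, fderiv ℝ g x v ∂(gaussianM C) = ∫ x, g x * ⟪clm C⁻¹ x, v⟫ ∂(gaussianM C) := by
  have hfin := isFinite_gaussianM hC
  have hfd : ∀ x, fderiv ℝ (gdens C) x v = -(gdens C x * ⟪clm C⁻¹ x, v⟫) := by
    intro x; rw [(gdens_hasFDerivAt hC x).fderiv]; simp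
  have hgm : AEStronglyMeasurable g (gaussianM C) := hg.continuous.aestronglyMeasurable
  have i1 : Integrable (fun x => fderiv ℝ g x v) (gaussianM C) := by
    refine (integrable_const (B * ‖v‖)).mono' (measurable_fderiv_apply_const ℝ g v).aestronglyMeasurable
      (.of_forall fun x => ?_)
    exact ((fderiv ℝ g x).le_opNorm v).trans (by gcongr; exact hB' x)
  have i2 : Integrable g (gaussianM C) :=
    (integrable_const B).mono' hgm (.of_forall hB)
  have i3 : Integrable (fun x => g x * ⟪clm C⁻¹ x, v⟫) (gaussianM C) := by
    refine ((integrable_oan hC).const_mul (B * (‖clm C⁻¹‖ * ‖v‖))).mono'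
      (hgm.mul (by fun_prop : Continuous _).aestronglyMeasurable) (.of_forall fun x => ?_)
    rw [norm_mul]
    have hB0 : 0 ≤ B := (abs_nonneg _).trans (hB x)
    have h1 : ‖⟪clm C⁻¹ x, v⟫‖ ≤ (‖clm C⁻¹‖ * ‖v‖) * (1 + ‖x‖) := by
      refine (norm_inner_le_norm _ _).trans ?_
      calc _ ≤ (‖clm C⁻¹‖ * ‖x‖) * ‖v‖ := by gcongr; exact (clm C⁻¹).le_opNorm x
        _ ≤ _ := by nlinarith [mul_nonneg (norm_nonneg (clm C⁻¹)) (norm_nonneg v)]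
    calc _ ≤ B * ((‖clm C⁻¹‖ * ‖v‖) * (1 + ‖x‖)) := by gcongr; exact hB x
      _ = _ := by ring
  rw [integral_gaussianM hC, integral_gaussianM hC]
  rw [integrable_gaussianM_iff hC] at i1 i2 i3
  have i3' : Integrable (fun x => g x * fderiv ℝ (gdens C) x v) := by
    refine i3.neg.congr (.of_forall fun x => ?_)
    simp only [hfd, Pi.neg_apply]; ring
  have := integral_mul_fderiv_eq_neg_fderiv_mul_of_integrable i1 i3' i2 (fun x _ => hg x)
    (fun x _ => (gdens_hasFDerivAt hC x).differentiableAt)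
  rw [← neg_eq_iff_eq_neg] at this
  rw [← this, ← integral_neg]
  congr 1; ext x; rw [hfd]; ring

lemma clm_clm_inv {d : ℕ} {C : Matrix (Fin d) (Fin d) ℝ} (hC : C.PosDef)
    (x : EuclideanSpace ℝ (Fin d)) : clm C (clm C⁻¹ x) = x := by
  have h : C * C⁻¹ = 1 := Matrix.mul_nonsing_inv _ (isUnit_iff_ne_zero.2 hC.det_pos.ne')
  have : clm C * clm C⁻¹ = 1 := by rw [← map_mul, h, map_one]
  exact congrArg (fun T => T x) this

/-- Vector Gaussian integration by parts. -/
lemma ibp_vec {d : ℕ} {C : Matrix (Fin d) (Fin d) ℝ} (hC : C.PosDef)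
    (F : EuclideanSpace ℝ (Fin d) → (EuclideanSpace ℝ (Fin d) →L[ℝ] ℝ)) (hF : Differentiable ℝ F)
    (B : ℝ) (hB : ∀ x, ‖F x‖ ≤ B) (hB' : ∀ x, ‖fderiv ℝ F x‖ ≤ B) :
    ∫ x, F x x ∂(gaussianM C) = ∫ x, ∑ i, fderiv ℝ F x (EuclideanSpace.basisFun (Fin d) ℝ i)
      (clm C (EuclideanSpace.basisFun (Fin d) ℝ i)) ∂(gaussianM C) := by
  have hfin := isFinite_gaussianM hC
  set e := EuclideanSpace.basisFun (Fin d) ℝ with he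
  have hd : ∀ v x, HasFDerivAt (fun x => F x v) ((fderiv ℝ F x).flip v) x := fun v x => by
    have := (hF x).hasFDerivAt.clm_apply (hasFDerivAt_const v x)
    simpa using this
  have hd' : ∀ v w x, fderiv ℝ (fun x => F x v) x w = fderiv ℝ F x w v := fun v w x => by
    rw [(hd v x).fderiv]; rfl
  have hB0 : 0 ≤ B := (norm_nonneg _).trans (hB 0)
  have hbd : ∀ v x, |F x v| ≤ B * ‖v‖ := fun v x =>
    ((F x).le_opNorm v).trans (by gcongr; exact hB x)
  have hbd' : ∀ v x, ‖fderiv ℝ (fun x => F x v) x‖ ≤ B * ‖v‖ := fun v x => by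
    rw [(hd v x).fderiv]
    refine ContinuousLinearMap.opNorm_le_bound _ (by positivity) fun w => ?_
    simp only [ContinuousLinearMap.flip_apply]
    calc _ ≤ ‖fderiv ℝ F x‖ * ‖w‖ * ‖v‖ := ContinuousLinearMap.le_opNorm₂ _ _ _
      _ ≤ B * ‖w‖ * ‖v‖ := by gcongr; exact hB' x
      _ = _ := by ring
  have hmain : ∀ i, ∫ x, fderiv ℝ F x (e i) (clm C (e i)) ∂(gaussianM C) =
      ∫ x, F x (clm C (e i)) * ⟪clm C⁻¹ x, e i⟫ ∂(gaussianM C) := fun i => by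
    rw [← ibp_scalar hC (fun x => F x (clm C (e i))) (fun x => (hd _ x).differentiableAt) _ (hbd _) (hbd' _)]
    simp_rw [hd']
  rw [integral_finsetSum]
  · simp_rw [hmain]
    rw [← integral_finsetSum]
    · congr 1; ext x
      have hx : x = ∑ i, ⟪e i, clm C⁻¹ x⟫ • clm C (e i) := by
        conv_lhs => rw [← clm_clm_inv hC x, ← e.sum_repr' (clm C⁻¹ x)]
        simp only [map_sum, map_smul]
      have hx2 := congrArg (F x) hx
      rw [hx2, map_sum]
      refine Finset.sum_congr rfl fun i _ => ?_
      rw [map_smul, smul_eq_mul, real_inner_comm, mul_comm]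
    · intro i _
      refine ((integrable_oan hC).const_mul (B * ‖clm C (e i)‖ * ‖clm C⁻¹‖)).mono' ?_
        (.of_forall fun x => ?_)
      · have := hF.continuous
        exact (by fun_prop : Continuous _).aestronglyMeasurable
      · rw [norm_mul]
        have h1 : ‖⟪clm C⁻¹ x, e i⟫‖ ≤ ‖clm C⁻¹‖ * (1 + ‖x‖) := by
          refine (norm_inner_le_norm _ _).trans ?_
          rw [e.norm_eq_one, mul_one]
          refine ((clm C⁻¹).le_opNorm x).trans ?_
          gcongr; linarith
        calc _ ≤ (B * ‖clm C (e i)‖) * (‖clm C⁻¹‖ * (1 + ‖x‖)) := by gcongr; exact hbd _ x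
          _ = _ := by ring
  · intro i _
    refine (integrable_const (B * ‖clm C (e i)‖)).mono' ?_ (.of_forall fun x => ?_)
    · simp_rw [← hd']
      exact (measurable_fderiv_apply_const ℝ _ _).aestronglyMeasurable
    · calc _ ≤ ‖fderiv ℝ F x‖ * ‖e i‖ * ‖clm C (e i)‖ := ContinuousLinearMap.le_opNorm₂ _ _ _
        _ ≤ B * ‖e i‖ * ‖clm C (e i)‖ := by gcongr; exact hB' x
        _ = _ := by rw [e.norm_eq_one, mul_one]

section aux

set_option maxSynthPendingDepth 3
set_option synthInstance.maxHeartbeats 400000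
set_option maxHeartbeats 1000000

lemma hasFDerivAt_mehler {d : ℕ} {G : Type*} [NormedAddCommGroup G] [NormedSpace ℝ G]
    (γ : Measure (EuclideanSpace ℝ (Fin d))) [IsFiniteMeasure γ]
    (f : EuclideanSpace ℝ (Fin d) → G) (hf : ContDiff ℝ 1 f) (B : ℝ)
    (hB : ∀ x, ‖f x‖ ≤ B) (hB' : ∀ x, ‖fderiv ℝ f x‖ ≤ B) (c s : ℝ) (x : EuclideanSpace ℝ (Fin d)) :
    HasFDerivAt (fun x => ∫ z, f (c • x + s • z) ∂γ) (c • ∫ z, fderiv ℝ f (c • x + s • z) ∂γ) x := by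
  have hc := hf.continuous
  have hc' : Continuous (fderiv ℝ f) := hf.continuous_fderiv one_ne_zero
  have hsc : SecondCountableTopologyEither (EuclideanSpace ℝ (Fin d))
      (EuclideanSpace ℝ (Fin d) →L[ℝ] G) := ⟨Or.inl inferInstance⟩
  rw [← integral_smul]
  refine hasFDerivAt_integral_of_dominated_of_fderiv_le (s := Set.univ) (bound := fun _ => |c| * B)
    (F' := fun x z => c • fderiv ℝ f (c • x + s • z)) Filter.univ_mem ?_ ?_ ?_ ?_ (integrable_const _) ?_
  · exact .of_forall fun x => (by fun_prop : Continuous _).aestronglyMeasurable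
  · exact (integrable_const B).mono' (by fun_prop : Continuous _).aestronglyMeasurable
      (.of_forall fun z => hB _)
  · exact (by fun_prop : Continuous _).aestronglyMeasurable
  · refine .of_forall fun z x _ => ?_
    rw [norm_smul, Real.norm_eq_abs]
    gcongr
    exact hB' _
  · refine .of_forall fun z x _ => ?_
    have h1 : HasFDerivAt (fun x : EuclideanSpace ℝ (Fin d) => c • x + s • z)
        (c • ContinuousLinearMap.id ℝ _) x := ((hasFDerivAt_id x).const_smul c).add_const _
    have h2 := ((hf.differentiable one_ne_zero) (c • x + s • z)).hasFDerivAt.comp x h1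
    refine h2.congr_fderiv ?_
    ext v; simp

/-- Time derivative of the Mehler semigroup. -/
noncomputable def dOU {d : ℕ} (γ : Measure (EuclideanSpace ℝ (Fin d))) (t : ℝ)
    (f : EuclideanSpace ℝ (Fin d) → ℝ) (x : EuclideanSpace ℝ (Fin d)) : ℝ :=
  ∫ z, fderiv ℝ f (Real.exp (-t / 2) • x + Real.sqrt (1 - Real.exp (-t)) • z)
    ((-(1/2) * Real.exp (-t / 2)) • x + (Real.exp (-t) / (2 * Real.sqrt (1 - Real.exp (-t)))) • z) ∂γ

lemma dOU_integrand_bound {d : ℕ} (f : EuclideanSpace ℝ (Fin d) → ℝ) (M : ℝ)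
    (hM : ∀ x, ‖fderiv ℝ f x‖ ≤ M) (r : ℝ) (hr : 0 < r) (t : ℝ) (ht : r < t)
    (x z : EuclideanSpace ℝ (Fin d)) :
    ‖fderiv ℝ f (Real.exp (-t / 2) • x + Real.sqrt (1 - Real.exp (-t)) • z)
    ((-(1/2) * Real.exp (-t / 2)) • x + (Real.exp (-t) / (2 * Real.sqrt (1 - Real.exp (-t)))) • z)‖
     ≤ M * (1 + 1 / (2 * √(1 - rexp (-r)))) * (1 + ‖x‖) * (1 + ‖z‖) := by
  have hM0 : 0 ≤ M := (norm_nonneg _).trans (hM 0)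
  have hr1 : 0 < 1 - rexp (-r) := by
    have : rexp (-r) < 1 := by rw [Real.exp_lt_one_iff]; linarith
    linarith
  have hle : 1 - rexp (-r) ≤ 1 - rexp (-t) := by gcongr
  have hsr := Real.sqrt_pos.2 hr1
  have hst := Real.sqrt_le_sqrt hle
  set K := 1 / (2 * √(1 - rexp (-r))) with hK
  have hK0 : 0 ≤ K := by positivity
  have h1 : rexp (-t / 2) ≤ 1 := by rw [Real.exp_le_one_iff]; linarith
  have h2 : rexp (-t) ≤ 1 := by rw [Real.exp_le_one_iff]; linarith
  have h3 : rexp (-t) / (2 * √(1 - rexp (-t))) ≤ K := by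
    rw [hK]; gcongr
  have h30 : 0 ≤ rexp (-t) / (2 * √(1 - rexp (-t))) := by positivity
  refine (ContinuousLinearMap.le_opNorm _ _).trans ?_
  have h4 : ‖(-(1/2) * Real.exp (-t / 2)) • x + (Real.exp (-t) / (2 * Real.sqrt (1 - Real.exp (-t)))) • z‖
      ≤ 1 * ‖x‖ + K * ‖z‖ := by
    refine (norm_add_le _ _).trans ?_
    rw [norm_smul, norm_smul, Real.norm_of_nonneg h30]
    gcongr
    rw [Real.norm_eq_abs, abs_mul, abs_of_pos (Real.exp_pos _)]
    norm_num
    linarith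
  calc _ ≤ M * (1 * ‖x‖ + K * ‖z‖) := by gcongr; exact hM _
    _ ≤ M * ((1 + K) * (1 + ‖x‖) * (1 + ‖z‖)) := by
      gcongr
      have := norm_nonneg x
      have := norm_nonneg z
      nlinarith [mul_nonneg (norm_nonneg x) (norm_nonneg z), mul_nonneg hK0 (norm_nonneg z), mul_nonneg hK0 (norm_nonneg x),
        mul_nonneg hK0 (mul_nonneg (norm_nonneg x) (norm_nonneg z))]
    _ = _ := by ring

lemma hasDerivAt_OU {d : ℕ} {C : Matrix (Fin d) (Fin d) ℝ} (hC : C.PosDef)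
    (f : EuclideanSpace ℝ (Fin d) → ℝ) (hf : ContDiff ℝ 1 f) (b M : ℝ) (hb : ∀ x, ‖f x‖ ≤ b)
    (hM : ∀ x, ‖fderiv ℝ f x‖ ≤ M) (t : ℝ) (ht : 0 < t) (x : EuclideanSpace ℝ (Fin d)) :
    HasDerivAt (fun τ => OU (gaussianM C) τ f x) (dOU (gaussianM C) t f x) t := by
  have hfin := isFinite_gaussianM hC
  have hc := hf.continuous
  have hc' : Continuous (fderiv ℝ f) := hf.continuous_fderiv one_ne_zero
  unfold OU dOU
  refine (hasDerivAt_integral_of_dominated_loc_of_deriv_le (s := Set.Ioi (t/2))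
    (bound := fun z => M * (1 + 1 / (2 * √(1 - rexp (-(t/2))))) * (1 + ‖x‖) * (1 + ‖z‖))
    (F' := fun t z => fderiv ℝ f (Real.exp (-t / 2) • x + Real.sqrt (1 - Real.exp (-t)) • z)
    ((-(1/2) * Real.exp (-t / 2)) • x + (Real.exp (-t) / (2 * Real.sqrt (1 - Real.exp (-t)))) • z))
    (Ioi_mem_nhds (by linarith)) ?_ ?_ ?_ ?_ ((integrable_oan hC).const_mul _) ?_).2
  · exact .of_forall fun x => (by fun_prop : Continuous _).aestronglyMeasurable
  · exact (integrable_const b).mono' (by fun_prop : Continuous _).aestronglyMeasurable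
      (.of_forall fun z => hb _)
  · exact (by fun_prop : Continuous _).aestronglyMeasurable
  · exact .of_forall fun z τ hτ => dOU_integrand_bound f M hM (t/2) (by linarith) τ hτ x z
  · refine .of_forall fun z τ hτ => ?_
    have hτ0 : 0 < τ := by have : t/2 < τ := hτ; linarith
    have hr1 : 0 < 1 - rexp (-τ) := by
      have : rexp (-τ) < 1 := by rw [Real.exp_lt_one_iff]; linarith
      linarith
    have h1 : HasDerivAt (fun τ : ℝ => rexp (-τ / 2)) (-(1/2) * rexp (-τ / 2)) τ := by
      have := (((hasDerivAt_id τ).neg).div_const 2).exp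
      refine this.congr_deriv ?_
      simp; ring
    have h2 : HasDerivAt (fun τ : ℝ => √(1 - rexp (-τ))) (rexp (-τ) / (2 * √(1 - rexp (-τ)))) τ := by
      have := ((((hasDerivAt_id τ).neg).exp).const_sub 1).sqrt hr1.ne'
      refine this.congr_deriv ?_
      simp
    have h3 := (h1.smul_const x).add (h2.smul_const z)
    exact ((hf.differentiable one_ne_zero) _).hasFDerivAt.comp_hasDerivAt τ h3

lemma dOU_bound {d : ℕ} {C : Matrix (Fin d) (Fin d) ℝ} (hC : C.PosDef)
    (f : EuclideanSpace ℝ (Fin d) → ℝ) (M : ℝ)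
    (hM : ∀ x, ‖fderiv ℝ f x‖ ≤ M) (r : ℝ) (hr : 0 < r) :
    ∃ K, 0 ≤ K ∧ ∀ t, r < t → ∀ x, |dOU (gaussianM C) t f x| ≤ K * (1 + ‖x‖) := by
  have hM0 : 0 ≤ M := (norm_nonneg _).trans (hM 0)
  refine ⟨M * (1 + 1 / (2 * √(1 - rexp (-r)))) * ∫ z, (1 + ‖z‖) ∂(gaussianM C), ?_, ?_⟩
  · have : 0 ≤ ∫ z, (1 + ‖z‖) ∂(gaussianM C) := integral_nonneg fun z => by positivity
    positivity
  intro t ht x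
  unfold dOU
  refine (norm_integral_le_of_norm_le ((integrable_oan hC).const_mul
    (M * (1 + 1 / (2 * √(1 - rexp (-r)))) * (1 + ‖x‖)))
    (.of_forall fun z => dOU_integrand_bound f M hM r hr t ht x z)).trans (le_of_eq ?_)
  rw [integral_const_mul]; ring

lemma fderiv_OU {d : ℕ} {C : Matrix (Fin d) (Fin d) ℝ} (hC : C.PosDef)
    (f : EuclideanSpace ℝ (Fin d) → ℝ) (hf : ContDiff ℝ 2 f) (B : ℝ) (hb : ∀ x, ‖f x‖ ≤ B)
    (hM : ∀ x, ‖fderiv ℝ f x‖ ≤ B) (t : ℝ) (x : EuclideanSpace ℝ (Fin d)) :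
    HasFDerivAt (OU (gaussianM C) t f) (rexp (-t / 2) • ∫ z, fderiv ℝ f
      (rexp (-t / 2) • x + √(1 - rexp (-t)) • z) ∂(gaussianM C)) x := by
  have hfin := isFinite_gaussianM hC
  exact hasFDerivAt_mehler (gaussianM C) f (hf.of_le (by norm_num)) B hb hM _ _ x

lemma fderiv_fderiv_OU {d : ℕ} {C : Matrix (Fin d) (Fin d) ℝ} (hC : C.PosDef)
    (f : EuclideanSpace ℝ (Fin d) → ℝ) (hf : ContDiff ℝ 2 f) (B : ℝ) (hb : ∀ x, ‖f x‖ ≤ B)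
    (hM : ∀ x, ‖fderiv ℝ f x‖ ≤ B) (hM2 : ∀ x, ‖fderiv ℝ (fderiv ℝ f) x‖ ≤ B) (t : ℝ)
    (x : EuclideanSpace ℝ (Fin d)) :
    HasFDerivAt (fderiv ℝ (OU (gaussianM C) t f)) (rexp (-t / 2) • rexp (-t / 2) •
      ∫ z, fderiv ℝ (fderiv ℝ f)
      (rexp (-t / 2) • x + √(1 - rexp (-t)) • z) ∂(gaussianM C)) x := by
  have hfin := isFinite_gaussianM hC
  have : fderiv ℝ (OU (gaussianM C) t f) = fun x => (rexp (-t / 2) • ∫ z, fderiv ℝ f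
      (rexp (-t / 2) • x + √(1 - rexp (-t)) • z) ∂(gaussianM C)) :=
    funext fun x => (fderiv_OU hC f hf B hb hM t x).fderiv
  rw [this]
  exact (hasFDerivAt_mehler (gaussianM C) (fderiv ℝ f) (hf.fderiv_right (by norm_num)) B hM hM2 _ _ x).const_smul (rexp (-t / 2))

/-- The Kolmogorov equation. -/
lemma dOU_eq {d : ℕ} {C : Matrix (Fin d) (Fin d) ℝ} (hC : C.PosDef)
    (f : EuclideanSpace ℝ (Fin d) → ℝ) (hf : ContDiff ℝ 2 f) (B : ℝ) (hb : ∀ x, ‖f x‖ ≤ B)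
    (hM : ∀ x, ‖fderiv ℝ f x‖ ≤ B) (hM2 : ∀ x, ‖fderiv ℝ (fderiv ℝ f) x‖ ≤ B) (t : ℝ) (ht : 0 < t)
    (x : EuclideanSpace ℝ (Fin d)) :
    dOU (gaussianM C) t f x = -(1/2) * fderiv ℝ (OU (gaussianM C) t f) x x +
      (1/2) * ∑ i, fderiv ℝ (fderiv ℝ (OU (gaussianM C) t f)) x (EuclideanSpace.basisFun (Fin d) ℝ i)
      (clm C (EuclideanSpace.basisFun (Fin d) ℝ i)) := by
  have hfin := isFinite_gaussianM hC
  set e := EuclideanSpace.basisFun (Fin d) ℝ with he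
  rw [(fderiv_OU hC f hf B hb hM t x).fderiv, (fderiv_fderiv_OU hC f hf B hb hM hM2 t x).fderiv]
  have hr1 : 0 < 1 - rexp (-t) := by
    have : rexp (-t) < 1 := by rw [Real.exp_lt_one_iff]; linarith
    linarith
  have hB0 : 0 ≤ B := (norm_nonneg _).trans (hb 0)
  have hs := Real.sqrt_pos.2 hr1
  have hcc : rexp (-t) = rexp (-t/2) * rexp (-t/2) := by rw [← Real.exp_add]; ring_nf
  unfold dOU
  set s := √(1 - rexp (-t)) with hsdef
  rw [hcc]
  set c := rexp (-t/2) with hcdef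
  have hf1 : ContDiff ℝ 1 (fderiv ℝ f) := hf.fderiv_right (by norm_num)
  have hc1 : Continuous (fderiv ℝ f) := hf1.continuous
  have hc2 : Continuous (fderiv ℝ (fderiv ℝ f)) := hf1.continuous_fderiv one_ne_zero
  have i1 : Integrable (fun z => fderiv ℝ f (c • x + s • z)) (gaussianM C) :=
    (integrable_const B).mono' (by fun_prop : Continuous _).aestronglyMeasurable
      (.of_forall fun z => hM _)
  have i2 : Integrable (fun z => fderiv ℝ (fderiv ℝ f) (c • x + s • z)) (gaussianM C) :=
    (integrable_const B).mono' (by fun_prop : Continuous _).aestronglyMeasurable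
      (.of_forall fun z => hM2 _)
  have i3 : Integrable (fun z => fderiv ℝ f (c • x + s • z) z) (gaussianM C) := by
    refine ((integrable_oan hC).const_mul B).mono' (by fun_prop : Continuous _).aestronglyMeasurable
      (.of_forall fun z => ?_)
    refine (ContinuousLinearMap.le_opNorm _ _).trans ?_
    gcongr
    · exact hM _
    · linarith
  have hF : ∀ z, HasFDerivAt (fun z => fderiv ℝ f (c • x + s • z))
      (s • fderiv ℝ (fderiv ℝ f) (c • x + s • z)) z := fun z => by
    have h1 : HasFDerivAt (fun z : EuclideanSpace ℝ (Fin d) => c • x + s • z)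
        (s • ContinuousLinearMap.id ℝ _) z := ((hasFDerivAt_id z).const_smul s).const_add _
    have h2 := ((hf1.differentiable one_ne_zero) (c • x + s • z)).hasFDerivAt.comp z h1
    refine h2.congr_fderiv ?_
    ext v; simp
  have hibp := ibp_vec hC (fun z => fderiv ℝ f (c • x + s • z)) (fun z => (hF z).differentiableAt)
    ((1 + s) * B) (fun z => (hM _).trans (by nlinarith)) (fun z => by
      rw [(hF z).fderiv, norm_smul, Real.norm_of_nonneg hs.le]
      nlinarith [hM2 (c • x + s • z)])
  simp only [map_add, map_smul, smul_eq_mul]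
  rw [integral_add ((i1.apply_continuousLinearMap x).const_mul _) (i3.const_mul _),
    integral_const_mul, integral_const_mul, hibp]
  simp only [(hF _).fderiv, FunLike.coe_smul, Pi.smul_apply, smul_eq_mul, ← Finset.mul_sum]
  rw [integral_const_mul, integral_finsetSum]
  · have h4 : ∀ i, ∫ z, fderiv ℝ (fderiv ℝ f) (c • x + s • z) (e i) (clm C (e i)) ∂(gaussianM C) =
      (∫ z, fderiv ℝ (fderiv ℝ f) (c • x + s • z) ∂(gaussianM C)) (e i) (clm C (e i)) := fun i => by
      rw [ContinuousLinearMap.integral_apply i2, ContinuousLinearMap.integral_apply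
        (i2.apply_continuousLinearMap _)]
    simp only [← he, h4]
    rw [← ContinuousLinearMap.integral_apply i1]
    field_simp
  · intro i _
    exact (i2.apply_continuousLinearMap _).apply_continuousLinearMap _

lemma sum_dual {d : ℕ} {C : Matrix (Fin d) (Fin d) ℝ} 
    (f : EuclideanSpace ℝ (Fin d) → ℝ) (x : EuclideanSpace ℝ (Fin d)) :
    ∑ i, fderiv ℝ f x (EuclideanSpace.basisFun (Fin d) ℝ i) *
      fderiv ℝ f x (clm C (EuclideanSpace.basisFun (Fin d) ℝ i)) =
      ⟪toEuc (Matrix.mulVec C (fromEuc (gradient f x))), gradient f x⟫ := by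
  set e := EuclideanSpace.basisFun (Fin d) ℝ with he
  have h : ∀ v, ⟪gradient f x, v⟫ = fderiv ℝ f x v := fun v => by
    rw [gradient, InnerProductSpace.toDual_symm_apply]
  change _ = ⟪clm C (gradient f x), gradient f x⟫
  rw [real_inner_comm, h]
  conv_rhs => rw [← e.sum_repr' (gradient f x)]
  simp only [map_sum, map_smul, smul_eq_mul]
  refine Finset.sum_congr rfl fun i _ => ?_
  rw [real_inner_comm, h]

lemma main_aux (d : ℕ)
    (C : Matrix (Fin d) (Fin d) ℝ) (hC : C.PosDef)
    (f : EuclideanSpace ℝ (Fin d) → ℝ) (hf : ContDiff ℝ 2 f)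
    (a b : ℝ) (ha : 0 < a) (hlow : ∀ x, a ≤ f x) (hup : ∀ x, f x ≤ b)
    (M : ℝ) (hder1 : ∀ x, ‖fderiv ℝ f x‖ ≤ M)
    (hder2 : ∀ x, ‖fderiv ℝ (fderiv ℝ f) x‖ ≤ M)
    (hmass : ∫ x, f x ∂(gaussianM C) = 1)
    (t : ℝ) (ht : 0 < t) :
    HasDerivAt
      (fun s => ∫ x, OU (gaussianM C) s f x * Real.log (OU (gaussianM C) s f x)
        ∂(gaussianM C))
      (-(1 / 2) *
        ∫ x,
          ⟪toEuc (Matrix.mulVec C (fromEuc (gradient (OU (gaussianM C) t f) x))),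
              gradient (OU (gaussianM C) t f) x⟫ / OU (gaussianM C) t f x
          ∂(gaussianM C))
      t := by
  have hfin := isFinite_gaussianM hC
  have hfc := hf.continuous
  set γ := gaussianM C with hγ
  -- total mass
  set m : ℝ := γ.real Set.univ with hm
  have hm0 : 0 < m := by
    rcases eq_or_lt_of_le (measureReal_nonneg : 0 ≤ γ.real Set.univ) with h | h
    · exfalso
      have : γ = 0 := by
        rw [← Measure.measure_univ_eq_zero]
        exact (measureReal_eq_zero_iff).1 h.symm
      rw [this] at hmass
      simp at hmass
    · exact h
  have hM0 : 0 ≤ M := (norm_nonneg _).trans (hder1 0)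
  have hb0 : 0 ≤ b := ha.le.trans ((hlow 0).trans (hup 0))
  have hfb : ∀ x, ‖f x‖ ≤ b := fun x => by
    rw [Real.norm_of_nonneg (ha.le.trans (hlow x))]; exact hup x
  set B := b + M with hB
  have hBb : ∀ x, ‖f x‖ ≤ B := fun x => (hfb x).trans (by linarith)
  have hB1 : ∀ x, ‖fderiv ℝ f x‖ ≤ B := fun x => (hder1 x).trans (by linarith)
  have hB2 : ∀ x, ‖fderiv ℝ (fderiv ℝ f) x‖ ≤ B := fun x => (hder2 x).trans (by linarith)
  have hB0 : 0 ≤ B := by positivity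
  have hint : ∀ (c s : ℝ) (x : EuclideanSpace ℝ (Fin d)), Integrable (fun z => f (c • x + s • z)) γ :=
    fun c s x => (integrable_const b).mono' (by fun_prop : Continuous _).aestronglyMeasurable
      (.of_forall fun z => hfb _)
  have hlo : ∀ τ x, a * m ≤ OU γ τ f x := fun τ x => by
    have := integral_mono (μ := γ) (integrable_const a)
      (hint (rexp (-τ/2)) (√(1 - rexp (-τ))) x) (fun z => hlow _)
    simpa [mul_comm, hm, OU] using this
  have hhi : ∀ τ x, OU γ τ f x ≤ b * m := fun τ x => by
    have := integral_mono (μ := γ) 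
      (hint (rexp (-τ/2)) (√(1 - rexp (-τ))) x) (integrable_const b) (fun z => hup _)
    simpa [mul_comm, hm, OU] using this
  have ham : 0 < a * m := by positivity
  have hpos : ∀ τ x, 0 < OU γ τ f x := fun τ x => ham.trans_le (hlo τ x)
  obtain ⟨L, hL⟩ : ∃ L, ∀ τ x, |Real.log (OU γ τ f x)| ≤ L := by
    refine ⟨|Real.log (a * m)| + |Real.log (b * m)|, fun τ x => ?_⟩
    have h1 := Real.log_le_log ham (hlo τ x)
    have h2 := Real.log_le_log (hpos τ x) (hhi τ x)
    rw [abs_le]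
    have := abs_nonneg (Real.log (a * m))
    have := abs_nonneg (Real.log (b * m))
    have := neg_abs_le (Real.log (a * m))
    have := le_abs_self (Real.log (b * m))
    constructor <;> linarith
  have hL0 : 0 ≤ L := (abs_nonneg _).trans (hL 0 0)
  have hd1 : ∀ τ, Differentiable ℝ (OU γ τ f) := fun τ x =>
    (fderiv_OU hC f hf B hBb hB1 τ x).differentiableAt
  have hd2 : ∀ τ, Differentiable ℝ (fderiv ℝ (OU γ τ f)) := fun τ x =>
    (fderiv_fderiv_OU hC f hf B hBb hB1 hB2 τ x).differentiableAt
  have hc0 : ∀ τ, Continuous (OU γ τ f) := fun τ => (hd1 τ).continuous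
  have hc1 : Continuous (fderiv ℝ (OU γ t f)) := (hd2 t).continuous
  have hlc : ∀ τ, Continuous (fun x => Real.log (OU γ τ f x)) := fun τ =>
    (hc0 τ).log fun x => (hpos τ x).ne'
  have hexp : ‖rexp (-t/2)‖ ≤ 1 := by
    rw [Real.norm_of_nonneg (Real.exp_pos _).le, Real.exp_le_one_iff]; linarith
  have hb1 : ∀ x, ‖fderiv ℝ (OU γ t f) x‖ ≤ B * m := fun x => by
    rw [(fderiv_OU hC f hf B hBb hB1 t x).fderiv, norm_smul]
    calc _ ≤ 1 * (B * m) := by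
          gcongr
          exact norm_integral_le_of_norm_le_const (.of_forall fun z => hB1 _)
      _ = _ := one_mul _
  have hb2 : ∀ x, ‖fderiv ℝ (fderiv ℝ (OU γ t f)) x‖ ≤ B * m := fun x => by
    rw [(fderiv_fderiv_OU hC f hf B hBb hB1 hB2 t x).fderiv, norm_smul, norm_smul]
    calc _ ≤ 1 * (1 * (B * m)) := by
          gcongr
          exact norm_integral_le_of_norm_le_const (.of_forall fun z => hB2 _)
      _ = _ := by ring
  have hBm0 : 0 ≤ B * m := by positivity
  set e := EuclideanSpace.basisFun (Fin d) ℝ with he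
  -- the trace term
  set T : EuclideanSpace ℝ (Fin d) → ℝ := fun x =>
    ∑ i, fderiv ℝ (fderiv ℝ (OU γ t f)) x (e i) (clm C (e i)) with hT
  have hTm : Measurable T := by
    refine Finset.measurable_sum _ fun i _ => ?_
    have h1 : Measurable (fun x => fderiv ℝ (fderiv ℝ (OU γ t f)) x (e i)) :=
      measurable_fderiv_apply_const ℝ _ _
    exact ((ContinuousLinearMap.apply ℝ ℝ (clm C (e i))).continuous.measurable).comp h1
  have hTb : ∀ x, |T x| ≤ ∑ i, B * m * ‖e i‖ * ‖clm C (e i)‖ := fun x => by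
    refine (Finset.abs_sum_le_sum_abs _ _).trans (Finset.sum_le_sum fun i _ => ?_)
    calc _ ≤ ‖fderiv ℝ (fderiv ℝ (OU γ t f)) x‖ * ‖e i‖ * ‖clm C (e i)‖ :=
          ContinuousLinearMap.le_opNorm₂ _ _ _
      _ ≤ _ := by gcongr; exact hb2 x
  have hH : ∀ x, dOU γ t f x = -(1/2) * fderiv ℝ (OU γ t f) x x + (1/2) * T x := fun x =>
    dOU_eq hC f hf B hBb hB1 hB2 t ht x
  -- differentiate under the integral
  obtain ⟨K, hK0, hK⟩ := dOU_bound hC f M hder1 (t/2) (by linarith)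
  have hmain := (hasDerivAt_integral_of_dominated_loc_of_deriv_le (μ := γ) (s := Set.Ioi (t/2))
    (x₀ := t) (F := fun s x => OU γ s f x * Real.log (OU γ s f x))
    (F' := fun s x => (Real.log (OU γ s f x) + 1) * dOU γ s f x)
    (bound := fun x => ((L + 1) * K) * (1 + ‖x‖)) (Ioi_mem_nhds (by linarith))
    (.of_forall fun s => ((hc0 s).mul (hlc s)).aestronglyMeasurable) ?_ ?_ ?_
    ((integrable_oan hC).const_mul _) ?_).2
  rotate_left
  · refine (integrable_const (b * m * L)).mono' ((hc0 t).mul (hlc t)).aestronglyMeasurable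
      (.of_forall fun x => ?_)
    rw [norm_mul]
    gcongr
    · rw [Real.norm_of_nonneg (hpos t x).le]; exact hhi t x
    · exact hL t x
  · have : dOU γ t f = fun x => -(1/2) * fderiv ℝ (OU γ t f) x x + (1/2) * T x := funext hH
    rw [this]
    refine (((hlc t).measurable.add_const 1).mul (Measurable.add ?_ (hTm.const_mul _))).aestronglyMeasurable
    exact (by fun_prop : Continuous _).measurable
  · refine .of_forall fun x s hs => ?_
    rw [norm_mul, mul_assoc]
    gcongr
    · refine (norm_add_le _ _).trans ?_
      simpa using hL s x
    · exact hK s hs x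
  · refine .of_forall fun x s hs => ?_
    have hs' : t/2 < s := hs
    have h1 := hasDerivAt_OU hC f (hf.of_le (by norm_num)) b M hfb hder1 s (by linarith) x
    have h2 := (Real.hasDerivAt_mul_log (hpos s x).ne').comp s h1
    exact h2
  refine hmain.congr_deriv ?_
  -- integration by parts
  set g : EuclideanSpace ℝ (Fin d) → ℝ := fun x => Real.log (OU γ t f x) + 1 with hg
  have hgd : ∀ x, HasFDerivAt g ((OU γ t f x)⁻¹ • fderiv ℝ (OU γ t f) x) x := fun x =>
    ((hd1 t x).hasFDerivAt.log (hpos t x).ne').add_const 1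
  have hgb : ∀ x, ‖g x‖ ≤ L + 1 := fun x => by
    refine (norm_add_le _ _).trans ?_
    simpa using hL t x
  have hgc : Continuous g := by have := hlc t; fun_prop
  have hFd : ∀ x, HasFDerivAt (fun x => g x • fderiv ℝ (OU γ t f) x)
    (g x • fderiv ℝ (fderiv ℝ (OU γ t f)) x + 
      ((OU γ t f x)⁻¹ • fderiv ℝ (OU γ t f) x).smulRight (fderiv ℝ (OU γ t f) x)) x := fun x =>
    (hgd x).smul (hd2 t x).hasFDerivAt
  have hinv : ∀ x, ‖(OU γ t f x)⁻¹‖ ≤ (a * m)⁻¹ := fun x => by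
    rw [Real.norm_of_nonneg (inv_nonneg.2 (hpos t x).le)]
    exact inv_anti₀ ham (hlo t x)
  have hq : 0 ≤ (a * m)⁻¹ * (B * m) * (B * m) := by positivity
  have hibp := ibp_vec hC (fun x => g x • fderiv ℝ (OU γ t f) x)
    (fun x => (hFd x).differentiableAt) ((L + 1) * (B * m) + (a * m)⁻¹ * (B * m) * (B * m))
    (fun x => by
      rw [norm_smul]
      have : ‖g x‖ * ‖fderiv ℝ (OU γ t f) x‖ ≤ (L + 1) * (B * m) := by
        gcongr
        · exact hgb x
        · exact hb1 x
      linarith)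
    (fun x => by
      rw [(hFd x).fderiv]
      refine (norm_add_le _ _).trans ?_
      rw [norm_smul, ContinuousLinearMap.norm_smulRight_apply, norm_smul]
      gcongr
      · exact hgb x
      · exact hb2 x
      · exact hinv x
      · exact hb1 x
      · exact hb1 x)
  set Γ : EuclideanSpace ℝ (Fin d) → ℝ := fun x => 
    ⟪toEuc (Matrix.mulVec C (fromEuc (gradient (OU γ t f) x))), gradient (OU γ t f) x⟫ / OU γ t f x with hΓ
  have hΓe : ∀ x, Γ x = (OU γ t f x)⁻¹ * ∑ i, fderiv ℝ (OU γ t f) x (e i) *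
      fderiv ℝ (OU γ t f) x (clm C (e i)) := fun x => by
    rw [sum_dual]; exact div_eq_inv_mul _ _
  have hΓc : Continuous Γ := by
    rw [funext hΓe]
    exact ((hc0 t).inv₀ fun x => (hpos t x).ne').mul (by fun_prop)
  have hΓb : ∀ x, ‖Γ x‖ ≤ (a * m)⁻¹ * ∑ i, (B * m * ‖e i‖) * (B * m * ‖clm C (e i)‖) := fun x => by
    rw [hΓe, norm_mul]
    gcongr
    · exact hinv x
    · refine (norm_sum_le _ _).trans (Finset.sum_le_sum fun i _ => ?_)
      rw [norm_mul]
      gcongr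
      · exact ((fderiv ℝ (OU γ t f) x).le_opNorm _).trans (by gcongr; exact hb1 x)
      · exact ((fderiv ℝ (OU γ t f) x).le_opNorm _).trans (by gcongr; exact hb1 x)
  have iΓ : Integrable Γ γ :=
    (integrable_const _).mono' hΓc.aestronglyMeasurable (.of_forall hΓb)
  have igT : Integrable (fun x => g x * T x) γ := by
    refine (integrable_const ((L + 1) * ∑ i, B * m * ‖e i‖ * ‖clm C (e i)‖)).mono'
      (hgc.measurable.mul hTm).aestronglyMeasurable (.of_forall fun x => ?_)
    rw [norm_mul]
    gcongr
    · exact hgb x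
    · exact hTb x
  have iF : Integrable (fun x => g x * fderiv ℝ (OU γ t f) x x) γ := by
    refine ((integrable_oan hC).const_mul ((L + 1) * (B * m))).mono'
      (by fun_prop : Continuous _).aestronglyMeasurable (.of_forall fun x => ?_)
    rw [norm_mul, mul_assoc]
    gcongr
    · exact hgb x
    · refine (ContinuousLinearMap.le_opNorm _ _).trans ?_
      gcongr
      · exact hb1 x
      · linarith
  have e1 : ∫ x, g x * fderiv ℝ (OU γ t f) x x ∂γ = ∫ x, g x * T x ∂γ + ∫ x, Γ x ∂γ := by
    rw [← integral_add igT iΓ]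
    refine Eq.trans (Eq.trans ?_ hibp) ?_
    · rfl
    · congr 1; ext x
      rw [(hFd x).fderiv, hΓe, hT, Finset.mul_sum, Finset.mul_sum, ← Finset.sum_add_distrib]
      refine Finset.sum_congr rfl fun i _ => ?_
      simp [mul_assoc, he]
  have e2 : ∀ x, g x * dOU γ t f x = -(1/2) * (g x * fderiv ℝ (OU γ t f) x x) + (1/2) * (g x * T x) :=
    fun x => by rw [hH]; ring
  change ∫ x, g x * dOU γ t f x ∂γ = _
  simp_rw [e2]
  rw [integral_add (iF.const_mul _) (igT.const_mul _), integral_const_mul, integral_const_mul, e1]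
  ring

end aux

/-- De Bruijn / entropy-dissipation identity along the Ornstein–Uhlenbeck flow: with
`ρ_t = P_t ρ₀`, the map `t ↦ ∫ ρ_t log ρ_t dγ` is differentiable on `(0,∞)` and
`d/dt ∫ ρ_t log ρ_t dγ = −½ ∫ ⟨C ∇ρ_t, ∇ρ_t⟩ / ρ_t dγ`. -/
theorem entropy_dissipation_ou (d : ℕ) (hd : 0 < d)
    (C : Matrix (Fin d) (Fin d) ℝ) (hC : C.PosDef)
    (ρ₀ : EuclideanSpace ℝ (Fin d) → ℝ) (hsmooth : ContDiff ℝ (⊤ : ℕ∞) ρ₀)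
    (a b : ℝ) (ha : 0 < a) (hlow : ∀ x, a ≤ ρ₀ x) (hup : ∀ x, ρ₀ x ≤ b)
    (M : ℝ) (hder1 : ∀ x, ‖fderiv ℝ ρ₀ x‖ ≤ M)
    (hder2 : ∀ x, ‖fderiv ℝ (fderiv ℝ ρ₀) x‖ ≤ M)
    (hmass : ∫ x, ρ₀ x ∂(gaussianM C) = 1)
    (t : ℝ) (ht : 0 < t) :
    HasDerivAt
      (fun s => ∫ x, OU (gaussianM C) s ρ₀ x * Real.log (OU (gaussianM C) s ρ₀ x)
        ∂(gaussianM C))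
      (-(1 / 2) *
        ∫ x,
          ⟪toEuc (Matrix.mulVec C (fromEuc (gradient (OU (gaussianM C) t ρ₀) x))),
              gradient (OU (gaussianM C) t ρ₀) x⟫ / OU (gaussianM C) t ρ₀ x
          ∂(gaussianM C))
      t := by
  exact main_aux d C hC ρ₀ (contDiff_infty.1 hsmooth 2) a b ha hlow hup M hder1 hder2 hmass t ht
end
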